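/- arXiv:1609.03049 — 2 statements merged into one kernel-verified Lean document; each statement's English description precedes it below -/
import Mathlib

section
/- The matroid M*(K_{3,3}), the dual of the cycle matroid of the complete bipartite graph K_{3,3}, is an excluded minor of \overline{BL}; in particular, there is no graph G with L(G) isomorphic to M*(K_{3,3}). -/
/-!
Throughout, an edge set of a graph is even if all degrees are even, i.e. if its boundary over
`ZMod 2` vanishes. Even sets are closed under symmetric difference, and the cycles are exactly the
minimal nonempty even sets; this rests on the bound `|X| + 1 ≤ |V|` for edge sets `X` without
nonempty even subsets (`EvenFree.card_lt`, a pigeonhole argument). Hence the cycle matroid of a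
finite graph has as independent sets the edge sets without nonempty even subset (`EvenRep`), and
deletion and contraction of edges are easily followed on even sets.

Let `N` be the dual of `M(K₃,₃)`.

*Proper minors of `N` are graphic.* Such a minor is a minor of `N ／ e`, dual to `K₃,₃ \ e`, or of
`N ＼ e`, dual to `K₃,₃ / e`. Both graphs are planar; explicit dual graphs are given by tables, and
`EvenRep.dual` verifies duality from orthogonality of even sets and Euler's count
`|V| + |F| ≤ |E| + 2`.

*`N` is not graphic.* In a graph representing `N`, each nonempty vertex star of non-loop edges is
codependent, so it contains a nonempty even set of `K₃,₃`, which has at least four edges. With nine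
edges there are at most four vertices, which is too few for the rank of `N`, which is at least 4.

*`N` is not a bicircular lift matroid.* Suppose `N = L(H)`. A base of `N` contains exactly one
cycle of `H`. If `f` lies on the cycle of the base `B`, then `B \ f` is a forest, and a forest with
one more edge is independent in `L(H)`, so the complement of `B \ f` is a cocircuit of `N`, that
is, a cycle of `K₃,₃`. Two choices of `f` would give two cycles of `K₃,₃` whose symmetric difference
has two edges, contradicting girth 4. So every base contains a loop of `H`; exchanging it for
another edge produces a second loop. Two loops of `H` are dependent in `L(H)`, but any two elements
of `N` are independent, since `K₃,₃` is 3-edge-connected.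
-/
open Set Matroid

universe u

namespace BLFormal

/-! ### Matroid preliminaries -/

/-- A circuit of a matroid: a minimal dependent set. -/
def Circuit {α : Type u} (M : Matroid α) (C : Set α) : Prop := Minimal M.Dep C

/-- Deletion of a set of elements from a matroid. -/
def del {α : Type u} (M : Matroid α) (D : Set α) : Matroid α := M ↾ (M.E \ D)

/-- Contraction of a set of elements of a matroid, defined by duality. -/
def con {α : Type u} (M : Matroid α) (C : Set α) : Matroid α := (del M✶ C)✶

/-- `N` is a minor of `M` if it is obtained by a contraction followed by a deletion. -/
def IsMinor {α : Type u} (N M : Matroid α) : Prop := ∃ C D : Set α, N = del (con M C) D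

/-- `N` is a proper (strict) minor of `M`. -/
def IsStrictMinor {α : Type u} (N M : Matroid α) : Prop := IsMinor N M ∧ N ≠ M

/-- The rank of a set `X` in the matroid `M`, as an extended natural number:
the supremum of the cardinalities of the independent subsets of `X`. -/
noncomputable def eRk {α : Type u} (M : Matroid α) (X : Set α) : ℕ∞ :=
  ⨆ I : {I : Set α // M.Indep I ∧ I ⊆ X}, (I : Set α).encard

/-- The rank `r(M)` of a matroid, as an extended natural number. -/
noncomputable def eRank {α : Type u} (M : Matroid α) : ℕ∞ := eRk M M.E

/-- A loop of a matroid. -/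
def MLoop {α : Type u} (M : Matroid α) (e : α) : Prop := M.Dep {e}

/-- A coloop of a matroid: a loop of the dual. -/
def MColoop {α : Type u} (M : Matroid α) (e : α) : Prop := MLoop M✶ e

/-- A `k`-separation of a matroid: a partition `(X, Y)` of the ground set with
`|X|, |Y| ≥ k` and `r(X) + r(Y) - r(M) ≤ k - 1`. -/
def IsKSep {α : Type u} (M : Matroid α) (k : ℕ) (X Y : Set α) : Prop :=
  X ∪ Y = M.E ∧ Disjoint X Y ∧ (k : ℕ∞) ≤ X.encard ∧ (k : ℕ∞) ≤ Y.encard ∧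
    eRk M X + eRk M Y ≤ eRank M + ((k - 1 : ℕ) : ℕ∞)

/-- A matroid is connected if it has no 1-separation. -/
def MConnected {α : Type u} (M : Matroid α) : Prop := ¬ ∃ X Y, IsKSep M 1 X Y

/-- A matroid is 3-connected if it is connected and has no 2-separation. -/
def ThreeConnected {α : Type u} (M : Matroid α) : Prop :=
  MConnected M ∧ ¬ ∃ X Y, IsKSep M 2 X Y

/-- Two elements of a matroid form a series pair if no circuit contains exactly one
of them, and some circuit contains both. -/
def SeriesPair {α : Type u} (M : Matroid α) (e f : α) : Prop :=
  (∀ C, Circuit M C → (e ∈ C ↔ f ∈ C)) ∧ ∃ C, Circuit M C ∧ e ∈ C ∧ f ∈ C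

/-- A series class: a maximal set in which every two elements form a series pair. -/
def IsSeriesClass {α : Type u} (M : Matroid α) (S : Set α) : Prop :=
  Maximal (fun T => T.Nonempty ∧ ∀ e ∈ T, ∀ f ∈ T, SeriesPair M e f) S

/-- `N` is a cosimplification `co(M)` of `M`: it is obtained from `M` by contracting
all coloops and, in each series class, all but one element. -/
def IsCosimplification {α : Type u} (M N : Matroid α) : Prop :=
  ∃ D ⊆ M.E, N = con M D ∧ (∀ e, MColoop M e → e ∈ D) ∧
    ∀ S, IsSeriesClass M S → ∃ x ∈ S, S \ D = {x}

/-- `M` is isomorphic to the uniform matroid `U_{k, n}`: the ground set has `n` elements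
and the circuits are precisely the `(k+1)`-element subsets of the ground set. -/
def IsUnif {α : Type u} (k n : ℕ) (M : Matroid α) : Prop :=
  M.E.encard = n ∧ ∀ C, Circuit M C ↔ C ⊆ M.E ∧ C.encard = k + 1

/-- `M` has a `U_{2,4}`-minor. -/
def HasU24Minor {α : Type u} (M : Matroid α) : Prop := ∃ N, IsMinor N M ∧ IsUnif 2 4 N

/-- `M` is isomorphic to the direct sum `U_{2,4} ⊕ U_{0,1}` of `U_{2,4}` and a loop:
its ground set consists of a 4-element set `X` together with one further element `l`,
and its circuits are `{l}` and the 3-element subsets of `X`. -/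
def IsU24PlusLoop {α : Type u} (M : Matroid α) : Prop :=
  ∃ (X : Set α) (l : α), l ∉ X ∧ M.E = insert l X ∧ X.encard = 4 ∧
    ∀ C, Circuit M C ↔ (C = {l} ∨ (C ⊆ X ∧ C.encard = 3))

/-- `M` is isomorphic to the Fano matroid `F₇`: the rank-3 matroid represented over
`GF(2)` by the seven nonzero vectors of `GF(2)³`. -/
def IsFano {α : Type u} (M : Matroid α) : Prop :=
  ∃ v : α → (Fin 3 → ZMod 2),
    Set.BijOn v M.E {w | w ≠ 0} ∧
    ∀ I ⊆ M.E, (M.Indep I ↔ LinearIndependent (ZMod 2) (fun x : I => v x))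

/-! ### Graphs (with loops and parallel edges allowed) -/

/-- A graph on vertex type `V`, with edge set `E` living in the ambient edge type `α`;
each edge is sent to the unordered pair of its end-vertices. -/
structure Graph (V : Type u) (α : Type u) where
  E : Set α
  inc : α → Sym2 V

namespace Graph

variable {V : Type u} {α : Type u}

/-- The vertices incident with an edge set `C`. -/
def vertsOf (G : Graph V α) (C : Set α) : Set V := {v | ∃ e ∈ C, v ∈ G.inc e}

/-- The vertex set of a graph (we consider graphs without isolated vertices). -/
def verts (G : Graph V α) : Set V := G.vertsOf G.E

/-- Deletion of a set of edges from a graph. -/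
def delete (G : Graph V α) (D : Set α) : Graph V α := ⟨G.E \ D, G.inc⟩

/-- The degree of a vertex `v` in the edge set `C`, with loops counting twice. -/
noncomputable def deg (G : Graph V α) (C : Set α) (v : V) : ℕ :=
  {e ∈ C | v ∈ G.inc e}.ncard + {e ∈ C | G.inc e = Sym2.diag v}.ncard

/-- Two vertices are adjacent via an edge of `C`. -/
def AdjOn (G : Graph V α) (C : Set α) (u v : V) : Prop := ∃ e ∈ C, G.inc e = s(u, v)

/-- The subgraph with edge set `C` is connected. -/
def ConnectedOn (G : Graph V α) (C : Set α) : Prop :=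
  ∀ u ∈ G.vertsOf C, ∀ v ∈ G.vertsOf C, Relation.ReflTransGen (G.AdjOn C) u v

/-- `C` is a cycle of `G` : the edge set of a connected 2-regular subgraph. -/
def IsCycle (G : Graph V α) (C : Set α) : Prop :=
  C ⊆ G.E ∧ C.Finite ∧ C.Nonempty ∧ (∀ v ∈ G.vertsOf C, G.deg C v = 2) ∧ G.ConnectedOn C

/-- A graph is 2-edge-connected if each of its edges lies in a cycle. -/
def TwoEdgeConnected (G : Graph V α) : Prop := ∀ e ∈ G.E, ∃ C, G.IsCycle C ∧ e ∈ C

/-- A graph is connected if it has at least one vertex and any two of its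
vertices are joined by a path. -/
def Connected (G : Graph V α) : Prop := G.verts.Nonempty ∧ G.ConnectedOn G.E

/-- Delete a vertex from a graph (removing all edges incident with it). -/
def delVert (G : Graph V α) (v : V) : Graph V α := ⟨{e ∈ G.E | v ∉ G.inc e}, G.inc⟩

/-- A graph is 2-connected if it is connected and stays connected after the
deletion of any vertex. -/
def TwoConnected (G : Graph V α) : Prop :=
  G.Connected ∧ ∀ v ∈ G.verts, (G.delVert v).Connected

/-- `X` contains at least two (distinct) cycles of `G`. -/
def HasTwoCycles (G : Graph V α) (X : Set α) : Prop :=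
  ∃ C₁ C₂, G.IsCycle C₁ ∧ G.IsCycle C₂ ∧ C₁ ≠ C₂ ∧ C₁ ⊆ X ∧ C₂ ⊆ X

/-- The circuits of the bicircular lift matroid of `G`: edge sets containing at
least two cycles and minimal with this property. -/
def LiftCircuit (G : Graph V α) (X : Set α) : Prop :=
  Minimal (fun Y => Y ⊆ G.E ∧ G.HasTwoCycles Y) X

/-- Two edges of a graph form a series pair if no cycle contains exactly one of
them, and some cycle contains both. -/
def SeriesPair (G : Graph V α) (e f : α) : Prop :=
  (∀ C, G.IsCycle C → (e ∈ C ↔ f ∈ C)) ∧ ∃ C, G.IsCycle C ∧ e ∈ C ∧ f ∈ C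

end Graph

/-- `N` is the bicircular lift matroid `L(G)` of `G` : its ground set is `E(G)`
and its circuits are the lift circuits of `G`. -/
def IsLiftRep {V α : Type u} (G : Graph V α) (N : Matroid α) : Prop :=
  N.E = G.E ∧ ∀ C, Circuit N C ↔ G.LiftCircuit C

/-- `N` is the cycle matroid `M(G)` of `G` : its ground set is `E(G)` and its
circuits are the cycles of `G`. -/
def IsGraphicRep {V α : Type u} (G : Graph V α) (N : Matroid α) : Prop :=
  N.E = G.E ∧ ∀ C, Circuit N C ↔ G.IsCycle C

/-- A matroid is bicircular lift if it is (isomorphic to) `L(G)` for some graph `G`. -/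
def IsBicircularLift {α : Type u} (N : Matroid α) : Prop :=
  ∃ (V : Type u) (G : Graph V α), IsLiftRep G N

/-- A matroid is graphic if it is (isomorphic to) the cycle matroid of some graph. -/
def IsGraphic {α : Type u} (N : Matroid α) : Prop :=
  ∃ (V : Type u) (G : Graph V α), IsGraphicRep G N

/-- The class `BL-bar` of matroids that are graphic or bicircular lift. -/
def InBL {α : Type u} (N : Matroid α) : Prop := IsGraphic N ∨ IsBicircularLift N

/-- `M` is an excluded minor for the class `BL-bar`. -/
def ExcludedMinorBL {α : Type u} (M : Matroid α) : Prop :=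
  ¬ InBL M ∧ ∀ N, IsStrictMinor N M → InBL N

/-! ### Special graphs and subdivisions -/

/-- `G` is (a copy of) the complete graph `K₄`. -/
def IsK4 {V α : Type u} (G : Graph V α) : Prop :=
  ∃ v : Fin 4 → V, Function.Injective v ∧
    ∃ ed : {p : Sym2 (Fin 4) // ¬ p.IsDiag} → α, Function.Injective ed ∧
      G.E = Set.range ed ∧ ∀ p, G.inc (ed p) = Sym2.map v p.1

/-- `G` is (a copy of) the complete graph `K₅`. -/
def IsK5 {V α : Type u} (G : Graph V α) : Prop :=
  ∃ v : Fin 5 → V, Function.Injective v ∧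
    ∃ ed : {p : Sym2 (Fin 5) // ¬ p.IsDiag} → α, Function.Injective ed ∧
      G.E = Set.range ed ∧ ∀ p, G.inc (ed p) = Sym2.map v p.1

/-- `G` is (a copy of) the complete bipartite graph `K₃,₃`. -/
def IsK33 {V α : Type u} (G : Graph V α) : Prop :=
  ∃ a b : Fin 3 → V, Function.Injective a ∧ Function.Injective b ∧
    Set.range a ∩ Set.range b = ∅ ∧
    ∃ ed : Fin 3 × Fin 3 → α, Function.Injective ed ∧
      G.E = Set.range ed ∧ ∀ p, G.inc (ed p) = s(a p.1, b p.2)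

/-- `G` is (a copy of) the graph `K₂ⁿ` with two vertices joined by `n` parallel edges. -/
def IsK2n {V α : Type u} (n : ℕ) (G : Graph V α) : Prop :=
  ∃ u v : V, u ≠ v ∧ ∃ ed : Fin n → α, Function.Injective ed ∧
    G.E = Set.range ed ∧ ∀ i, G.inc (ed i) = s(u, v)

/-- `H` is obtained from `G` by subdividing a single edge. -/
def ElemSub {V α : Type u} (G H : Graph V α) : Prop :=
  ∃ e ∈ G.E, ∃ (f g : α) (u v w : V),
    G.inc e = s(u, v) ∧ w ∉ G.verts ∧ f ≠ g ∧
    f ∉ G.E \ {e} ∧ g ∉ G.E \ {e} ∧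
    H.E = (G.E \ {e}) ∪ {f, g} ∧
    H.inc f = s(u, w) ∧ H.inc g = s(w, v) ∧
    ∀ x ∈ G.E \ {e}, H.inc x = G.inc x

/-- `H` is a subdivision of `G` : it is obtained from `G` by repeatedly
subdividing edges. -/
def IsSubdivision {V α : Type u} (G H : Graph V α) : Prop :=
  Relation.ReflTransGen ElemSub G H

/-! ### 2-sums and simplification -/

/-- `N` is the 2-sum `N₁ ⊕₂ᵉ N₂` of `N₁` and `N₂` along `e`. -/
def Is2Sum {α : Type u} (N N₁ N₂ : Matroid α) (e : α) : Prop :=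
  N₁.E ∩ N₂.E = {e} ∧
  ¬ MLoop N₁ e ∧ ¬ MColoop N₁ e ∧ ¬ MLoop N₂ e ∧ ¬ MColoop N₂ e ∧
  N.E = (N₁.E ∪ N₂.E) \ {e} ∧
  ∀ C, Circuit N C ↔
    ((Circuit N₁ C ∧ e ∉ C) ∨ (Circuit N₂ C ∧ e ∉ C) ∨
      ∃ C₁ C₂, Circuit N₁ C₁ ∧ Circuit N₂ C₂ ∧ e ∈ C₁ ∧ e ∈ C₂ ∧
        C = (C₁ \ {e}) ∪ (C₂ \ {e}))

/-- `H` is a simplification `si(G)` of `G` : it is obtained from `G` by deleting all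
loops and all but one edge of each parallel class. -/
def IsSimplification {V α : Type u} (G H : Graph V α) : Prop :=
  H.inc = G.inc ∧ H.E ⊆ G.E ∧ (∀ e ∈ H.E, ¬ (G.inc e).IsDiag) ∧
    ∀ e ∈ G.E, ¬ (G.inc e).IsDiag → ∃! f, f ∈ H.E ∧ G.inc f = G.inc e

/-- `H` is 2-connected, or is obtained from a 2-connected graph and a single edge `K₂`
by identifying one end-vertex of the edge with a vertex of the 2-connected graph. -/
def TwoConnOrPendant {V α : Type u} (H : Graph V α) : Prop :=
  H.TwoConnected ∨
    ∃ (e : α) (u w : V), e ∈ H.E ∧ H.inc e = s(u, w) ∧ u ≠ w ∧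
      (H.delete {e}).TwoConnected ∧ u ∈ (H.delete {e}).verts ∧ w ∉ (H.delete {e}).verts

/-! ### Even edge sets and cycles -/

section EvenSets

open scoped Classical

variable {V α : Type u}

/-- The number of ends of the pair `z` at the vertex `v`, so that a loop at `v` counts twice. -/
noncomputable def mult (z : Sym2 V) (v : V) : ℕ :=
  (if v ∈ z then 1 else 0) + (if z = Sym2.diag v then 1 else 0)

lemma mult_mk (a b v : V) :
    mult s(a, b) v = (if v = a then 1 else 0) + (if v = b then 1 else 0) := by
  unfold mult
  by_cases h1 : v = a <;> by_cases h2 : v = b <;> simp_all [Sym2.diag, eq_comm]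

/-- The mod 2 boundary of a finite edge set: the degree of each vertex, in `ZMod 2`.
The sets `C` with `bd G C = 0` are called even below. -/
noncomputable def bd (G : Graph V α) (C : Finset α) (v : V) : ZMod 2 :=
  ∑ e ∈ C, (mult (G.inc e) v : ZMod 2)

lemma deg_coe (G : Graph V α) (C : Finset α) (v : V) :
    G.deg (C : Set α) v = ∑ e ∈ C, mult (G.inc e) v := by
  unfold Graph.deg mult
  rw [Finset.sum_add_distrib, Finset.sum_boole, Finset.sum_boole,
    ← Set.ncard_coe_finset, ← Set.ncard_coe_finset]
  simp

lemma bd_eq_deg (G : Graph V α) (C : Finset α) (v : V) :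
    bd G C v = (G.deg (C : Set α) v : ZMod 2) := by
  rw [deg_coe, bd, Nat.cast_sum]

lemma zmod2_self_add (a : ZMod 2) : a + a = 0 := CharTwo.add_self_eq_zero a

lemma bd_symmDiff (G : Graph V α) (C D : Finset α) :
    bd G (symmDiff C D) = bd G C + bd G D := by
  funext v
  have hC := Finset.sum_inter_add_sum_sdiff C D (fun e => (mult (G.inc e) v : ZMod 2))
  have hD := Finset.sum_inter_add_sum_sdiff D C (fun e => (mult (G.inc e) v : ZMod 2))
  have hu : symmDiff C D = (C \ D) ∪ (D \ C) := rfl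
  have hdis : Disjoint (C \ D) (D \ C) := disjoint_sdiff_sdiff
  simp only [Pi.add_apply, bd]
  rw [hu, Finset.sum_union hdis, ← hC, ← hD, Finset.inter_comm D C]
  linear_combination -(zmod2_self_add (∑ e ∈ C ∩ D, (mult (G.inc e) v : ZMod 2)))

lemma bd_empty (G : Graph V α) : bd G ∅ = 0 := by
  funext v; simp [bd]

lemma bd_of_not_mem (G : Graph V α) (C : Finset α) (v : V) (h : ∀ e ∈ C, v ∉ G.inc e) :
    bd G C v = 0 := by
  refine Finset.sum_eq_zero fun e he => ?_
  have h1 := h e he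
  have : G.inc e ≠ Sym2.diag v := fun h2 => h1 (by rw [h2]; simp [Sym2.diag])
  simp [mult, h1, this]

lemma sum_mult (z : Sym2 V) (S : Finset V) (h : ∀ v ∈ z, v ∈ S) : ∑ v ∈ S, mult z v = 2 := by
  induction z using Sym2.ind with
  | _ a b =>
    have ha := h a (by simp)
    have hb := h b (by simp)
    simp [mult_mk, Finset.sum_add_distrib, ha, hb]

lemma sum_bd (G : Graph V α) (C : Finset α) (S : Finset V)
    (h : ∀ e ∈ C, ∀ v ∈ G.inc e, v ∈ S) : ∑ v ∈ S, bd G C v = 0 := by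
  unfold bd
  rw [Finset.sum_comm]
  refine Finset.sum_eq_zero fun e he => ?_
  rw [← Nat.cast_sum, sum_mult _ _ (h e he)]
  rfl

/-- `I` contains no nonempty finite even set. For `I ⊆ G.E` this says that `I` is a forest
(`evenFree_iff_no_isCycle`). -/
def EvenFree (G : Graph V α) (I : Set α) : Prop :=
  ∀ D : Finset α, (D : Set α) ⊆ I → bd G D = 0 → D = ∅

/-- A forest on a nonempty vertex set has fewer edges than vertices. Otherwise two of its
subsets would have the same boundary away from one vertex `s`, hence everywhere since boundaries
sum to zero, and their symmetric difference would be a nonempty even set. -/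
lemma EvenFree.card_lt {G : Graph V α} {X : Finset α} (hX : EvenFree G X) {S : Finset V}
    (hne : S.Nonempty) (hS : ∀ e ∈ X, ∀ v ∈ G.inc e, v ∈ S) : X.card + 1 ≤ S.card := by
  obtain ⟨s, hs⟩ := hne
  by_contra hlt
  have hSpos : 1 ≤ S.card := Finset.card_pos.2 ⟨s, hs⟩
  have hcard : ((S.erase s).powerset).card < (X.powerset).card := by
    rw [Finset.card_powerset, Finset.card_powerset, Finset.card_erase_of_mem hs]
    exact Nat.pow_lt_pow_right (by norm_num) (by omega)
  obtain ⟨D, hD, D', hD', hDD, heq⟩ := Finset.exists_ne_map_eq_of_card_lt_of_maps_to hcard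
    (f := fun D => (S.erase s).filter (fun v => bd G D v ≠ 0))
    (fun D _ => Finset.mem_coe.2 (Finset.mem_powerset.2 (Finset.filter_subset _ _)))
  rw [Finset.mem_powerset] at hD hD'
  apply hDD
  have hsub : symmDiff D D' ⊆ X := by
    intro x hx
    rcases Finset.mem_symmDiff.1 hx with h | h
    · exact hD h.1
    · exact hD' h.1
  have hoff : ∀ v ∈ S.erase s, bd G (symmDiff D D') v = 0 := by
    intro v hv
    have h1 : bd G D v ≠ 0 ↔ bd G D' v ≠ 0 := by
      have := Finset.ext_iff.1 heq v
      simpa only [Finset.mem_filter, hv, true_and] using this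
    rw [bd_symmDiff, Pi.add_apply]
    generalize bd G D v = x at *
    generalize bd G D' v = y at *
    revert x y; decide
  have h0 : bd G (symmDiff D D') = 0 := by
    funext v
    by_cases hvS : v ∈ S
    · by_cases hvs : v = s
      · have := sum_bd G (symmDiff D D') S (fun e he => hS e (hsub he))
        rw [← Finset.add_sum_erase _ _ hs, Finset.sum_eq_zero hoff, add_zero] at this
        rw [hvs, this]; rfl
      · exact hoff v (Finset.mem_erase.2 ⟨hvs, hvS⟩)
    · exact bd_of_not_mem _ _ _ fun e he hv => hvS (hS e (hsub he) v hv)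
  have := hX _ (by exact_mod_cast hsub) h0
  exact symmDiff_eq_bot.1 this

lemma exists_ne_of_bd_eq_zero {G : Graph V α} {C : Finset α} {e : α} {v w : V} (he : e ∈ C)
    (hC : bd G C v = 0) (hinc : G.inc e = s(v, w)) (hvw : v ≠ w) :
    ∃ f ∈ C, f ≠ e ∧ v ∈ G.inc f := by
  by_contra! h
  have h1 : bd G (C.erase e) v = 0 := bd_of_not_mem _ _ _ fun f hf =>
    h f (Finset.mem_of_mem_erase hf) (Finset.ne_of_mem_erase hf)
  have h2 : (mult (G.inc e) v : ZMod 2) + bd G (C.erase e) v = bd G C v :=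
    Finset.add_sum_erase C (fun e => (mult (G.inc e) v : ZMod 2)) he
  rw [h1, hC, hinc, mult_mk] at h2
  simp [hvw] at h2

lemma deg_pos {G : Graph V α} {C : Finset α} {v : V} (h : v ∈ G.vertsOf C) :
    1 ≤ G.deg (C : Set α) v := by
  obtain ⟨e, he, hv⟩ := h
  rw [deg_coe]
  refine le_trans ?_ (Finset.single_le_sum (f := fun e => mult (G.inc e) v)
    (fun _ _ => Nat.zero_le _) (Finset.mem_coe.1 he))
  simp [mult, hv]

lemma deg_mono {G : Graph V α} {C D : Finset α} (h : D ⊆ C) (v : V) :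
    G.deg (D : Set α) v ≤ G.deg (C : Set α) v := by
  rw [deg_coe, deg_coe]
  exact Finset.sum_le_sum_of_subset h

lemma even_deg_of_bd {G : Graph V α} {C : Finset α} {v : V} (h : bd G C v = 0) :
    2 ∣ G.deg (C : Set α) v := by
  rw [bd_eq_deg] at h
  exact (ZMod.natCast_eq_zero_iff _ _).1 h

lemma IsCycle.bd_eq_zero {G : Graph V α} {C : Finset α} (h : G.IsCycle C) : bd G C = 0 := by
  funext v
  by_cases hv : v ∈ G.vertsOf C
  · rw [bd_eq_deg, h.2.2.2.1 v hv]; rfl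
  · exact bd_of_not_mem _ _ _ fun e he hve => hv ⟨e, he, hve⟩

/-- A cycle contains no smaller nonempty even set: such a set has degree 2 at each of its
vertices, so it cannot be left along an edge of the cycle. -/
lemma IsCycle.minimal {G : Graph V α} {C D : Finset α} (h : G.IsCycle C) (hD : D ⊆ C)
    (hD0 : bd G D = 0) (hne : D.Nonempty) : D = C := by
  -- at a vertex of `D` all edges of `C` belong to `D`
  have key : ∀ v ∈ G.vertsOf D, ∀ e ∈ C, v ∈ G.inc e → e ∈ D := by
    intro v hv e he hve
    by_contra heD
    have h1 := deg_pos hv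
    have h2 := even_deg_of_bd (congrFun hD0 v)
    have h3 := h.2.2.2.1 v ⟨e, he, hve⟩
    have h4 : G.deg (D : Set α) v + 1 ≤ G.deg (C : Set α) v := by
      refine le_trans ?_ (deg_mono (D := insert e D) (Finset.insert_subset he hD) v)
      rw [deg_coe, deg_coe, Finset.sum_insert heD, add_comm]
      gcongr
      simp [mult, hve]
    omega
  obtain ⟨d, hd⟩ := hne
  obtain ⟨u, hu⟩ : ∃ u, u ∈ G.inc d := ⟨_, Sym2.out_fst_mem _⟩
  have hreach : ∀ v, Relation.ReflTransGen (G.AdjOn C) u v → v ∈ G.vertsOf D := by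
    intro v hv
    induction hv with
    | refl => exact ⟨d, hd, hu⟩
    | tail _ hbc ih =>
      obtain ⟨e, he, hinc⟩ := hbc
      exact ⟨e, key _ ih e he (by simp [hinc]), by simp [hinc]⟩
  refine Finset.Subset.antisymm hD fun e he => ?_
  obtain ⟨v, hv⟩ : ∃ v, v ∈ G.inc e := ⟨_, Sym2.out_fst_mem _⟩
  exact key v (hreach v (h.2.2.2.2 u ⟨d, hD hd, hu⟩ v ⟨e, he, hv⟩)) e he hv

/-- A minimal nonempty even set is a cycle. Removing an edge leaves a forest, so there are at most
as many edges as vertices; as all degrees are at least 2, they are all equal to 2. Connectedness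
holds because a component of an even set is even. -/
lemma isCycle_of_minimal {G : Graph V α} {C : Finset α} (hCE : (C : Set α) ⊆ G.E)
    (hne : C.Nonempty) (h0 : bd G C = 0)
    (hmin : ∀ D ⊆ C, bd G D = 0 → D.Nonempty → D = C) : G.IsCycle C := by
  refine ⟨hCE, C.finite_toSet, by exact_mod_cast hne, ?_, ?_⟩
  · set S : Finset V := C.biUnion (fun e => (G.inc e).toFinset) with hS
    have hmem : ∀ v, v ∈ S ↔ v ∈ G.vertsOf C := by
      intro v; simp [hS, Graph.vertsOf]
    obtain ⟨e, he⟩ := hne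
    have hSne : S.Nonempty := by
      refine ⟨(G.inc e).out.1, ?_⟩
      rw [hmem]; exact ⟨e, he, Sym2.out_fst_mem _⟩
    have hfree : EvenFree G (C.erase e : Finset α) := by
      intro D hD hD0
      by_contra hDne
      have hD' : D ⊆ C.erase e := by exact_mod_cast hD
      have := hmin D (hD'.trans (Finset.erase_subset _ _)) hD0
        (Finset.nonempty_iff_ne_empty.2 hDne)
      rw [this] at hD'
      exact Finset.notMem_erase e C (hD' he)
    have hcard := hfree.card_lt hSne (fun f hf v hv =>
      (hmem v).2 ⟨f, Finset.mem_of_mem_erase hf, hv⟩)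
    rw [Finset.card_erase_add_one he] at hcard
    have hsum : ∑ v ∈ S, G.deg (C : Set α) v = 2 * C.card := by
      simp_rw [deg_coe]
      rw [Finset.sum_comm, Finset.sum_congr rfl (fun f hf => sum_mult (G.inc f) S
        (fun v hv => (hmem v).2 ⟨f, hf, hv⟩))]
      simp [mul_comm]
    have hge : ∀ v ∈ S, 2 ≤ G.deg (C : Set α) v := by
      intro v hv
      have h1 := deg_pos ((hmem v).1 hv)
      have h2 := even_deg_of_bd (congrFun h0 v)
      omega
    have heq : ∑ v ∈ S, 2 = ∑ v ∈ S, G.deg (C : Set α) v := by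
      refine le_antisymm (Finset.sum_le_sum hge) ?_
      rw [hsum]; simp; omega
    intro v hv
    exact ((Finset.sum_eq_sum_iff_of_le hge).1 heq v ((hmem v).2 hv)).symm
  · intro u hu v hv
    set D := C.filter (fun e => ∃ x ∈ G.inc e, Relation.ReflTransGen (G.AdjOn C) u x) with hD
    have hall : ∀ e ∈ D, ∀ y ∈ G.inc e, Relation.ReflTransGen (G.AdjOn C) u y := by
      intro e he y hy
      obtain ⟨heC, x, hx, hux⟩ := Finset.mem_filter.1 he
      by_cases hxy : x = y
      · exact hxy ▸ hux
      · exact hux.tail ⟨e, heC, ((Sym2.mem_and_mem_iff hxy).1 ⟨hx, hy⟩)⟩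
    have hD0 : bd G D = 0 := by
      funext y
      by_cases hy : Relation.ReflTransGen (G.AdjOn C) u y
      · rw [← h0, bd, bd]
        refine Finset.sum_subset (Finset.filter_subset _ _) fun e he heD => ?_
        have : y ∉ G.inc e := fun hye => heD (Finset.mem_filter.2 ⟨he, y, hye, hy⟩)
        have := bd_of_not_mem G {e} y (by simpa using this)
        simpa [bd] using this
      · exact bd_of_not_mem _ _ _ fun e he hye => hy (hall e he y hye)
    obtain ⟨e, he, hue⟩ := hu
    have hDC := hmin D (Finset.filter_subset _ _) hD0
      ⟨e, Finset.mem_filter.2 ⟨he, u, hue, .refl⟩⟩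
    obtain ⟨f, hf, hvf⟩ := hv
    exact hall f (hDC ▸ hf) v hvf

lemma exists_isCycle_subset {G : Graph V α} {C : Finset α} (hCE : (C : Set α) ⊆ G.E)
    (hne : C.Nonempty) (h0 : bd G C = 0) : ∃ D ⊆ C, G.IsCycle (D : Set α) := by
  induction C using Finset.strongInduction with
  | H C ih =>
    by_cases h : ∀ D ⊆ C, bd G D = 0 → D.Nonempty → D = C
    · exact ⟨C, subset_rfl, isCycle_of_minimal hCE hne h0 h⟩
    · push Not at h
      obtain ⟨D, hDC, hD0, hDne, hDC'⟩ := h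
      obtain ⟨K, hK, hcyc⟩ := ih D (hDC.ssubset_of_ne hDC')
        ((Finset.coe_subset.2 hDC).trans hCE) hDne hD0
      exact ⟨K, hK.trans hDC, hcyc⟩

lemma evenFree_iff_no_isCycle {G : Graph V α} {I : Set α} (hI : I ⊆ G.E) :
    EvenFree G I ↔ ∀ C ⊆ I, ¬ G.IsCycle C := by
  constructor
  · intro h C hCI hC
    lift C to Finset α using hC.2.1
    have := h C hCI (IsCycle.bd_eq_zero hC)
    simpa [this] using hC.2.2.1
  · intro h D hD h0
    by_contra hne
    obtain ⟨K, hK, hcyc⟩ := exists_isCycle_subset (hD.trans hI)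
      (Finset.nonempty_iff_ne_empty.2 hne) h0
    exact h K ((Finset.coe_subset.2 hK).trans hD) hcyc

end EvenSets

/-! ### Finite graphic matroids: minors and duals -/

section Representations

open scoped Classical

variable {V W α : Type u}

/-- `M` is the cycle matroid of the finite graph `G`, phrased through independent sets: these are
the edge sets containing no nonempty even set. -/
def EvenRep (G : Graph V α) (M : Matroid α) : Prop :=
  M.E = G.E ∧ G.E.Finite ∧ ∀ I ⊆ G.E, M.Indep I ↔ EvenFree G I

lemma IsGraphicRep.evenRep {G : Graph V α} {M : Matroid α} (h : IsGraphicRep G M)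
    (hfin : G.E.Finite) : EvenRep G M := by
  refine ⟨h.1, hfin, fun I hI => ?_⟩
  rw [evenFree_iff_no_isCycle hI, indep_iff_forall_subset_not_isCircuit (by rwa [h.1])]
  exact forall₂_congr fun C _ => not_congr (h.2 C)

lemma EvenRep.isGraphicRep {G : Graph V α} {M : Matroid α} (h : EvenRep G M) :
    IsGraphicRep G M := by
  obtain ⟨hE, hfin, hI⟩ := h
  have hdep : ∀ X, M.Dep X ↔ X ⊆ G.E ∧ ∃ C ⊆ X, G.IsCycle C := by
    intro X
    rw [dep_iff, hE, and_comm]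
    refine and_congr_right fun hX => ?_
    rw [hI X hX, evenFree_iff_no_isCycle hX]
    push Not
    rfl
  refine ⟨hE, fun C => ?_⟩
  constructor
  · intro hC
    obtain ⟨hCE, C', hC', hcyc⟩ := (hdep C).1 hC.1
    have := hC.2 ((hdep C').2 ⟨hcyc.1, C', subset_rfl, hcyc⟩) hC'
    rwa [subset_antisymm this hC']
  · intro hC
    refine ⟨(hdep C).2 ⟨hC.1, C, subset_rfl, hC⟩, fun X hX hXC => ?_⟩
    obtain ⟨_, K, hKX, hK⟩ := (hdep X).1 hX
    have hKC : K ⊆ C := hKX.trans hXC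
    lift C to Finset α using hC.2.1
    lift K to Finset α using hK.2.1
    have hne : K.Nonempty := by exact_mod_cast hK.2.2.1
    have := IsCycle.minimal hC (by exact_mod_cast hKC) (IsCycle.bd_eq_zero hK) hne
    rw [← this]; exact hKX

lemma EvenRep.exists_bd_of_dep {G : Graph V α} {M : Matroid α} (h : EvenRep G M) {X : Set α}
    (hX : M.Dep X) : ∃ C : Finset α, (C : Set α) ⊆ X ∧ bd G C = 0 ∧ C.Nonempty := by
  have h1 := hX.1
  have hXE : X ⊆ G.E := h.1 ▸ hX.2
  rw [h.2.2 X hXE, EvenFree] at h1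
  push Not at h1
  obtain ⟨C, hC, h0, hne⟩ := h1
  exact ⟨C, hC, h0, hne⟩

lemma EvenRep.isCircuit_bd {G : Graph V α} {M : Matroid α} (h : EvenRep G M) {C : Finset α}
    (hC : M.IsCircuit C) : bd G C = 0 :=
  IsCycle.bd_eq_zero ((h.isGraphicRep.2 C).1 hC)

lemma EvenRep.delete {G : Graph V α} {M : Matroid α} (h : EvenRep G M) (D : Set α) :
    EvenRep (G.delete D) (M ＼ D) := by
  refine ⟨by simp [Graph.delete, h.1], h.2.1.subset sdiff_subset, fun I hI => ?_⟩
  have hI' : I ⊆ G.E \ D := hI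
  rw [delete_indep_iff, h.2.2 I (hI'.trans sdiff_subset)]
  have : Disjoint I D := (subset_sdiff.1 hI').2
  simp only [this, and_true]
  rfl

/-- The graph obtained from `G` by contracting the edge `e` joining `u` and `v`: the vertex `v` is
merged into `u`. -/
noncomputable def contractEdge (G : Graph V α) (e : α) (u v : V) : Graph V α :=
  ⟨G.E \ {e}, fun x => (G.inc x).map (fun y => if y = v then u else y)⟩

lemma mult_map (z : Sym2 V) {u v : V} (huv : u ≠ v) (x : V) :
    mult (z.map (fun y => if y = v then u else y)) x =
      if x = v then 0 else if x = u then mult z u + mult z v else mult z x := by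
  induction z using Sym2.ind with
  | _ a b =>
    simp only [Sym2.map_mk, mult_mk]
    by_cases h1 : a = v <;> by_cases h2 : b = v <;> by_cases h3 : x = v <;>
      by_cases h4 : x = u <;> grind

lemma bd_contractEdge (G : Graph V α) (e : α) {u v : V} (huv : u ≠ v) (C : Finset α) (x : V) :
    bd (contractEdge G e u v) C x =
      if x = v then 0 else if x = u then bd G C u + bd G C v else bd G C x := by
  have : ∀ f, (mult ((contractEdge G e u v).inc f) x : ZMod 2) =
      if x = v then 0 else if x = u then (mult (G.inc f) u : ZMod 2) + mult (G.inc f) v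
        else (mult (G.inc f) x : ZMod 2) := by
    intro f
    rw [contractEdge, mult_map _ huv]
    split_ifs <;> simp
  unfold bd
  simp_rw [this]
  split_ifs <;> simp [Finset.sum_add_distrib]

/-- The even sets of the contraction are the sets `C` such that `C` or `C ∆ {e}` is even in
`G`. -/
lemma bd_contractEdge_eq_zero (G : Graph V α) {e : α} {u v : V} (huv : u ≠ v)
    (hinc : G.inc e = s(u, v)) (C : Finset α) :
    bd (contractEdge G e u v) C = 0 ↔ bd G C = 0 ∨ bd G C = bd G {e} := by
  have he : ∀ x, bd G {e} x = if x = u then 1 else if x = v then 1 else 0 := by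
    intro x
    simp only [bd, Finset.sum_singleton, hinc, mult_mk]
    split_ifs <;> simp_all
  constructor
  · intro h
    have hx := fun x => (bd_contractEdge G e huv C x).symm.trans (congrFun h x)
    have hu := hx u
    simp only [huv, if_false, if_true, Pi.zero_apply] at hu
    have hvu : bd G C v = bd G C u := by
      linear_combination hu - zmod2_self_add (bd G C u)
    have h01 : bd G C u = 0 ∨ bd G C u = 1 := by
      generalize bd G C u = t; revert t; decide
    refine h01.imp (fun h0 => ?_) (fun h0 => ?_) <;> funext x
    · have := hx x
      split_ifs at this with h1 h2
      · rw [h1, hvu, h0]; rfl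
      · rw [h2, h0]; rfl
      · exact this
    · have := hx x
      rw [he]
      split_ifs at this with h1 h2
      · rw [h1, hvu, h0]; simp
      · rw [h2, h0]; simp
      · rw [if_neg h2, if_neg h1]; exact this
  · intro h
    funext x
    rw [bd_contractEdge G e huv]
    rcases h with h | h <;> simp only [h, he] <;> split_ifs <;> simp_all
    all_goals rfl

lemma EvenRep.contractElem {G : Graph V α} {M : Matroid α} (h : EvenRep G M) {e : α} {u v : V}
    (he : e ∈ G.E) (huv : u ≠ v) (hinc : G.inc e = s(u, v)) :
    EvenRep (contractEdge G e u v) (M ／ {e}) := by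
  have hesingle : bd G {e} ≠ 0 := by
    intro h0
    have := congrFun h0 u
    simp [bd, hinc, mult_mk, huv] at this
  have hnl : M.IsNonloop e := by
    rw [← indep_singleton, h.2.2 _ (by simpa using he)]
    intro D hD h0
    rw [← Finset.coe_singleton, Finset.coe_subset] at hD
    rcases Finset.subset_singleton_iff.1 hD with h1 | h1
    · exact h1
    · rw [h1] at h0; exact absurd h0 hesingle
  refine ⟨by simp [contractEdge, h.1], h.2.1.subset sdiff_subset, fun I hI => ?_⟩
  have hI' : I ⊆ G.E \ {e} := hI
  have heI : e ∉ I := fun h1 => (hI' h1).2 rfl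
  rw [hnl.contractElem_indep_iff,
    h.2.2 _ (insert_subset he (hI'.trans sdiff_subset))]
  simp only [heI, not_false_eq_true, true_and]
  constructor
  · intro hf D hD h0
    rcases (bd_contractEdge_eq_zero G huv hinc D).1 h0 with h1 | h1
    · exact hf D (hD.trans (subset_insert _ _)) h1
    · exfalso
      have heD : e ∉ D := fun h2 => heI (hD h2)
      have := hf (symmDiff D {e}) (by
        intro x hx
        rcases Finset.mem_symmDiff.1 (Finset.mem_coe.1 hx) with h2 | h2
        · exact Or.inr (hD h2.1)
        · exact Or.inl (Finset.mem_singleton.1 h2.1)) (by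
        rw [bd_symmDiff, h1]; funext x; exact zmod2_self_add _)
      have h3 : D = {e} := symmDiff_eq_bot.1 this
      exact heD (by simp [h3])
  · intro hf D hD h0
    by_cases heD : e ∈ D
    · exfalso
      have hs : symmDiff (D.erase e) {e} = D := by
        ext x
        simp only [Finset.mem_symmDiff, Finset.mem_erase, Finset.mem_singleton]
        by_cases hx : x = e <;> simp [hx, heD]
      have h1 : bd G (D.erase e) = bd G {e} := by
        rw [← hs, bd_symmDiff] at h0
        funext x
        have := congrFun h0 x
        simp only [Pi.add_apply, Pi.zero_apply] at this
        linear_combination this - zmod2_self_add (bd G {e} x)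
      have h2 := hf (D.erase e) (by
        intro x hx
        have hx' := Finset.mem_erase.1 (Finset.mem_coe.1 hx)
        exact (hD hx'.2).resolve_left hx'.1)
        ((bd_contractEdge_eq_zero G huv hinc _).2 (Or.inr h1))
      rw [h2, bd_empty] at h1
      exact hesingle h1.symm
    · exact hf D (fun x hx => (hD hx).resolve_left (fun h1 => heD (h1 ▸ hx)))
        ((bd_contractEdge_eq_zero G huv hinc D).2 (Or.inl h0))

/-- `M` is the cycle matroid of a graph with finitely many edges. -/
def FinGraphic (M : Matroid α) : Prop := ∃ (V : Type u) (G : Graph V α), EvenRep G M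

lemma FinGraphic.delete {M : Matroid α} (h : FinGraphic M) (D : Set α) : FinGraphic (M ＼ D) := by
  obtain ⟨V, G, hG⟩ := h
  exact ⟨V, _, hG.delete D⟩

lemma FinGraphic.contractElem {M : Matroid α} (h : FinGraphic M) (e : α) :
    FinGraphic (M ／ {e}) := by
  obtain ⟨V, G, hG⟩ := h
  by_cases he : e ∈ M.E
  · have heG : e ∈ G.E := hG.1 ▸ he
    obtain ⟨u, v, hinc⟩ : ∃ u v, G.inc e = s(u, v) := by
      induction hz : G.inc e using Sym2.ind with
      | _ u v => exact ⟨u, v, rfl⟩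
    by_cases huv : u = v
    · have hl : M.IsLoop e := by
        rw [← singleton_dep, ← not_indep_iff (by simpa using he),
          hG.2.2 _ (by simpa using heG)]
        intro hf
        have := hf {e} (by simp) (by
          funext x
          simp only [bd, Finset.sum_singleton, hinc, mult_mk, huv]
          push_cast
          exact zmod2_self_add _)
        simp at this
      rw [contract_eq_delete_of_subset_loops (singleton_subset_iff.2 hl)]
      exact ⟨V, _, hG.delete _⟩
    · exact ⟨V, _, hG.contractElem heG huv hinc⟩
  · rw [contractElem_eq_self he]
    exact ⟨V, G, hG⟩

lemma FinGraphic.contract {M : Matroid α} (h : FinGraphic M) (C : Set α) :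
    FinGraphic (M ／ C) := by
  have hfin : (C ∩ M.E).Finite := by
    obtain ⟨V, G, hG⟩ := h
    exact (hG.1 ▸ hG.2.1).subset inter_subset_right
  rw [← contract_inter_ground_eq]
  generalize C ∩ M.E = K at hfin ⊢
  induction K, hfin using Set.Finite.induction_on with
  | empty => simpa using h
  | @insert a s _ _ ih =>
    rw [insert_eq, union_comm, ← contract_contract]
    exact ih.contractElem a

/-- A set whose intersection with every circuit differs from `{x}`, for a fixed member `x`, is
codependent: otherwise a base avoids it, and the fundamental circuit of `x` meets it in `{x}`
only. -/
lemma dual_dep_of_forall_inter_ne {M : Matroid α} {X : Set α} {x : α} (hx : x ∈ X)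
    (hX : X ⊆ M.E) (h : ∀ C, M.IsCircuit C → C ∩ X ≠ {x}) : ¬ M✶.Indep X := by
  intro hi
  obtain ⟨B, hB, hdis⟩ := (dual_indep_iff_exists hX).1 hi
  have hxB : x ∉ B := fun h1 => hdis.le_bot ⟨hx, h1⟩
  refine h _ (hB.fundCircuit_isCircuit (hX hx) hxB) ?_
  ext y
  constructor
  · rintro ⟨hy, hyX⟩
    rcases M.fundCircuit_subset_insert x B hy with h1 | h1
    · exact h1
    · exact (hdis.le_bot ⟨hyX, h1⟩).elim
  · rintro rfl
    exact ⟨M.mem_fundCircuit _ _, hx⟩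

/-- Algebraic planar duality. If no even set of `G` meets an even set of `H` in a single edge, and
the vertex numbers satisfy `|V(G)| + |V(H)| ≤ |E| + 2`, then `H` represents the dual of the cycle
matroid of `G`. Orthogonality makes coindependent sets forests of `H`, and makes the complement of
a maximal forest `B` of `H` a forest of `G`; the inequality forces that complement to be a
base. -/
lemma EvenRep.dual {G : Graph V α} {H : Graph W α} {M : Matroid α} (hG : EvenRep G M)
    (hE : H.E = G.E) {S : Finset V} {T : Finset W} (hSne : S.Nonempty) (hTne : T.Nonempty)
    (hS : ∀ e ∈ G.E, ∀ v ∈ G.inc e, v ∈ S) (hT : ∀ e ∈ G.E, ∀ v ∈ H.inc e, v ∈ T)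
    (hcard : S.card + T.card ≤ G.E.ncard + 2)
    (horth : ∀ C D : Finset α, (C : Set α) ⊆ G.E → (D : Set α) ⊆ G.E → bd G C = 0 →
      bd H D = 0 → ∀ e, C ∩ D ≠ {e}) : EvenRep H M✶ := by
  refine ⟨by simp [hE, hG.1], hE ▸ hG.2.1, fun I hI => ?_⟩
  rw [hE] at hI
  have hMf : M.E.Finite := hG.1 ▸ hG.2.1
  constructor
  · intro hind D hD h0
    by_contra hne
    obtain ⟨x, hx⟩ := Finset.nonempty_iff_ne_empty.2 hne
    refine dual_dep_of_forall_inter_ne (M := M) (X := D) (Finset.mem_coe.2 hx)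
      (by rw [hG.1]; exact hD.trans hI) (fun C hC hCD => ?_) (hind.subset hD)
    lift C to Finset α using hMf.subset hC.subset_ground
    exact horth C D (hG.1 ▸ hC.subset_ground) (hD.trans hI) (hG.isCircuit_bd hC) h0 x
      (by exact_mod_cast hCD)
  · intro hfree
    obtain ⟨B, hIB, hBmax⟩ := (hG.2.1.finite_subsets.subset
      (t := {J | J ⊆ G.E ∧ EvenFree H J}) (fun J hJ => hJ.1)).exists_le_maximal
      (show I ∈ {J | J ⊆ G.E ∧ EvenFree H J} from ⟨hI, hfree⟩)
    have hBE : B ⊆ G.E := hBmax.1.1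
    have hBc : M.Indep (G.E \ B) := by
      rw [hG.2.2 _ sdiff_subset]
      intro C hC h0
      by_contra hne
      obtain ⟨x, hx⟩ := Finset.nonempty_iff_ne_empty.2 hne
      have hxC := hC (Finset.mem_coe.2 hx)
      have hnf : ¬ EvenFree H (insert x B) := fun hf =>
        hxC.2 (hBmax.2 (show insert x B ∈ _ from ⟨insert_subset hxC.1 hBE, hf⟩)
          (subset_insert _ _) (mem_insert _ _))
      unfold EvenFree at hnf
      push Not at hnf
      obtain ⟨D, hD, hD0, hDne⟩ := hnf
      have hxD : x ∈ D := by
        by_contra hxD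
        exact hDne.ne_empty (hBmax.1.2 D
          (fun y hy => (hD hy).resolve_left (fun h1 => hxD (h1 ▸ hy))) hD0)
      refine horth C D (hC.trans sdiff_subset) (hD.trans (insert_subset hxC.1 hBE)) h0 hD0 x ?_
      ext y
      simp only [Finset.mem_inter, Finset.mem_singleton]
      constructor
      · rintro ⟨h1, h2⟩
        exact (hD h2).resolve_right (hC h1).2
      · rintro rfl
        exact ⟨hx, hxD⟩
    obtain ⟨B₁, hB₁, hsub⟩ := hBc.exists_isBase_superset
    have hB₁E : B₁ ⊆ G.E := hG.1 ▸ hB₁.subset_ground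
    have hBf := hG.2.1.subset hBE
    have hB₁f := hG.2.1.subset hB₁E
    have c1 : B.ncard + 1 ≤ T.card := by
      have := hBmax.1.2
      rw [← hBf.coe_toFinset] at this
      rw [ncard_eq_toFinset_card _ hBf]
      exact this.card_lt hTne (fun e he => hT e (hBE (by simpa using he)))
    have c2 : B₁.ncard + 1 ≤ S.card := by
      have := (hG.2.2 _ hB₁E).1 hB₁.indep
      rw [← hB₁f.coe_toFinset] at this
      rw [ncard_eq_toFinset_card _ hB₁f]
      exact this.card_lt hSne (fun e he => hS e (hB₁E (by simpa using he)))
    have c3 := ncard_sdiff_add_ncard_of_subset hBE hG.2.1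
    have heq := Set.eq_of_subset_of_ncard_le hsub (by omega) hB₁f
    rw [dual_indep_iff_exists (by rw [hG.1]; exact hI)]
    refine ⟨B₁, hB₁, ?_⟩
    rw [← heq]
    exact disjoint_sdiff_right.mono_left hIB

end Representations

/-! ### Edges of `K₃,₃` deleted or contracted -/

section K33

open scoped Classical

variable {V W α : Type u}

/-- Coordinates on a copy of `K₃,₃`: the vertices of the two sides are `a i` and `b j`, and
`ed (i, j)` is the edge joining `a i` to `b j`. -/
structure K33Coord (G : Graph V α) (a b : Fin 3 → V) (ed : Fin 3 × Fin 3 → α) : Prop where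
  a_inj : Function.Injective a
  b_inj : Function.Injective b
  a_ne_b : ∀ i j, a i ≠ b j
  ed_inj : Function.Injective ed
  E_eq : G.E = Set.range ed
  inc_eq : ∀ p, G.inc (ed p) = s(a p.1, b p.2)

lemma IsK33.exists_coord {G : Graph V α} (h : IsK33 G) : ∃ a b ed, K33Coord G a b ed := by
  obtain ⟨a, b, ha, hb, hab, ed, hed, hE, hinc⟩ := h
  exact ⟨a, b, ed, ha, hb, fun i j hij =>
    (Set.eq_empty_iff_forall_notMem.1 hab (a i)) ⟨⟨i, rfl⟩, ⟨j, hij.symm⟩⟩, hed, hE, hinc⟩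

/-- By symmetry of `K₃,₃`, any given edge may be given the coordinates `(0, 0)`. -/
lemma IsK33.exists_coord_at {G : Graph V α} (h : IsK33 G) {e : α} (he : e ∈ G.E) :
    ∃ a b ed, K33Coord G a b ed ∧ ed (0, 0) = e := by
  obtain ⟨a, b, ed, hc⟩ := IsK33.exists_coord h
  rw [hc.E_eq] at he
  obtain ⟨⟨i, j⟩, rfl⟩ := he
  let σ := Equiv.swap 0 i
  let τ := Equiv.swap 0 j
  refine ⟨a ∘ σ, b ∘ τ, ed ∘ (Equiv.prodCongr σ τ),
    ⟨hc.a_inj.comp σ.injective, hc.b_inj.comp τ.injective, fun _ _ => hc.a_ne_b _ _,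
      hc.ed_inj.comp (Equiv.injective _), ?_, fun p => hc.inc_eq _⟩, ?_⟩
  · rw [hc.E_eq, Set.range_comp, Equiv.range_eq_univ, Set.image_univ]
  · simp [σ, τ]

/-- The indicator function of `C` in the coordinates `ed`, with values in `ZMod 2`. -/
noncomputable def ind (ed : Fin 3 × Fin 3 → α) (C : Finset α) (i j : Fin 3) : ZMod 2 :=
  if ed (i, j) ∈ C then 1 else 0

lemma bd_coord {ed : Fin 3 × Fin 3 → α} (hed : Function.Injective ed) (H : Graph W α)
    {C : Finset α} (hC : (C : Set α) ⊆ Set.range ed) (v : W) :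
    bd H C v = ∑ i, ∑ j, ind ed C i j * (mult (H.inc (ed (i, j))) v : ZMod 2) := by
  have hCe : C = (Finset.univ.filter (fun p => ed p ∈ C)).image ed := by
    ext x
    simp only [Finset.mem_image, Finset.mem_filter, Finset.mem_univ, true_and]
    constructor
    · intro hx
      obtain ⟨p, rfl⟩ := hC hx
      exact ⟨p, hx, rfl⟩
    · rintro ⟨p, hp, rfl⟩
      exact hp
  rw [← Fintype.sum_prod_type' (f := fun i j => ind ed C i j * (mult (H.inc (ed (i, j))) v : ZMod 2))]
  conv_lhs => rw [bd, hCe, Finset.sum_image (fun _ _ _ _ h => hed h), Finset.sum_filter]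
  refine Finset.sum_congr rfl fun p _ => ?_
  simp [ind]

lemma inter_ne_singleton_of_sum {ed : Fin 3 × Fin 3 → α} (hed : Function.Injective ed)
    {C D : Finset α} (hC : (C : Set α) ⊆ Set.range ed)
    (h : ∑ i, ∑ j, ind ed C i j * ind ed D i j = 0) (e : α) : C ∩ D ≠ {e} := by
  intro he
  have heCD : e ∈ C ∩ D := by simp [he]
  obtain ⟨p, rfl⟩ := hC (Finset.mem_of_mem_inter_left heCD)
  rw [← Fintype.sum_prod_type' (f := fun i j => ind ed C i j * ind ed D i j)] at h
  have : ∀ q : Fin 3 × Fin 3, ind ed C q.1 q.2 * ind ed D q.1 q.2 = if q = p then 1 else 0 := by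
    intro q
    have h1 := Finset.ext_iff.1 he (ed q)
    simp only [Finset.mem_inter, Finset.mem_singleton, hed.eq_iff] at h1
    simp only [ind, Prod.mk.eta, ← h1]
    split_ifs <;> simp_all
  simp [this] at h

lemma K33Coord.bd_a {G : Graph V α} {a b : Fin 3 → V} {ed : Fin 3 × Fin 3 → α}
    (h : K33Coord G a b ed) {C : Finset α} (hC : (C : Set α) ⊆ Set.range ed) (i : Fin 3) :
    bd G C (a i) = ∑ j, ind ed C i j := by
  rw [bd_coord h.ed_inj G hC]
  simp [h.inc_eq, mult_mk, h.a_inj.eq_iff, h.a_ne_b]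

lemma K33Coord.bd_b {G : Graph V α} {a b : Fin 3 → V} {ed : Fin 3 × Fin 3 → α}
    (h : K33Coord G a b ed) {C : Finset α} (hC : (C : Set α) ⊆ Set.range ed) (j : Fin 3) :
    bd G C (b j) = ∑ i, ind ed C i j := by
  rw [bd_coord h.ed_inj G hC]
  simp [h.inc_eq, mult_mk, h.b_inj.eq_iff, fun i j => (h.a_ne_b i j).symm]

/-- `K₃,₃` has girth 4, in the form that a nonempty even set has at least four edges. -/
lemma K33Coord.four_le_card {G : Graph V α} {a b : Fin 3 → V} {ed : Fin 3 × Fin 3 → α}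
    (h : K33Coord G a b ed) {C : Finset α} (hC : (C : Set α) ⊆ G.E) (h0 : bd G C = 0)
    (hne : C.Nonempty) : 4 ≤ C.card := by
  rw [h.E_eq] at hC
  have hrow : ∀ i j, ed (i, j) ∈ C → ∃ j', j' ≠ j ∧ ed (i, j') ∈ C := by
    intro i j hij
    obtain ⟨f, hf, hne, hv⟩ := exists_ne_of_bd_eq_zero hij (congrFun h0 (a i)) (h.inc_eq _)
      (h.a_ne_b i j)
    obtain ⟨⟨i', j'⟩, rfl⟩ := hC hf
    simp only [h.inc_eq, Sym2.mem_iff, h.a_inj.eq_iff, h.a_ne_b, or_false] at hv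
    subst hv
    exact ⟨j', fun hj => hne (by rw [hj]), hf⟩
  have hcol : ∀ i j, ed (i, j) ∈ C → ∃ i', i' ≠ i ∧ ed (i', j) ∈ C := by
    intro i j hij
    obtain ⟨f, hf, hne, hv⟩ := exists_ne_of_bd_eq_zero hij (congrFun h0 (b j))
      ((h.inc_eq _).trans Sym2.eq_swap) (h.a_ne_b i j).symm
    obtain ⟨⟨i', j'⟩, rfl⟩ := hC hf
    simp only [h.inc_eq, Sym2.mem_iff, h.b_inj.eq_iff, (h.a_ne_b _ _).symm, false_or] at hv
    subst hv
    exact ⟨i', fun hj => hne (by rw [hj]), hf⟩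
  obtain ⟨e, he⟩ := hne
  obtain ⟨⟨i, j⟩, rfl⟩ := hC he
  obtain ⟨j', hj', h1⟩ := hrow i j he
  obtain ⟨i', hi', h2⟩ := hcol i j he
  obtain ⟨i'', hi'', h3⟩ := hcol i j' h1
  have hsub : ({(i, j), (i, j'), (i', j), (i'', j')} : Finset (Fin 3 × Fin 3)).image ed ⊆ C := by
    intro x hx
    simp only [Finset.image_insert, Finset.image_singleton, Finset.mem_insert,
      Finset.mem_singleton] at hx
    rcases hx with rfl | rfl | rfl | rfl <;> assumption
  refine le_trans (le_of_eq ?_) (Finset.card_le_card hsub)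
  rw [Finset.card_image_of_injective _ h.ed_inj]
  rw [Finset.card_insert_of_notMem, Finset.card_insert_of_notMem, Finset.card_insert_of_notMem,
    Finset.card_singleton] <;>
      simp [hj', hj'.symm, hi'.symm, hi''.symm]

/-- The graph on `n` vertices in which the edge `ed (i, j)` has the ends `t i j`. The edge
`ed (0, 0)` is left out, so the value `t 0 0` is irrelevant. -/
noncomputable def tableGraph (ed : Fin 3 × Fin 3 → α) {n : ℕ}
    (t : Fin 3 → Fin 3 → Sym2 (Fin n)) : Graph (ULift.{u} (Fin n)) α :=
  ⟨Set.range ed \ {ed (0, 0)}, fun e =>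
    (t (Function.invFun ed e).1 (Function.invFun ed e).2).map ULift.up⟩

lemma bd_tableGraph {ed : Fin 3 × Fin 3 → α} (hed : Function.Injective ed) {n : ℕ}
    (t : Fin 3 → Fin 3 → Sym2 (Fin n)) {C : Finset α} (hC : (C : Set α) ⊆ Set.range ed)
    (k : Fin n) :
    bd (tableGraph ed t) C ⟨k⟩ = ∑ i, ∑ j, ind ed C i j * (mult (t i j) k : ZMod 2) := by
  rw [bd_coord hed _ hC]
  refine Finset.sum_congr rfl fun i _ => Finset.sum_congr rfl fun j _ => ?_
  congr 2
  simp only [tableGraph, Function.leftInverse_invFun hed (i, j)]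
  induction t i j using Sym2.ind with
  | _ x y =>
    simp only [Sym2.map_mk, mult_mk, ULift.ext_iff]
    split_ifs <;> rfl

/-- The planar dual of `K₃,₃` with the edge `(0, 0)` deleted; its vertices are the four faces of a
planar drawing. The entry at `(0, 0)` is a dummy. -/
def deleteDual : Fin 3 → Fin 3 → Sym2 (Fin 4) :=
  ![![s(0, 0), s(0, 1), s(0, 1)],
    ![s(2, 3), s(0, 2), s(0, 3)],
    ![s(2, 3), s(1, 2), s(1, 3)]]

/-- The planar dual of `K₃,₃` with the edge `(0, 0)` contracted, a wheel with hub `0`; its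
vertices are the five faces of a planar drawing. The entry at `(0, 0)` is a dummy. -/
def contractDual : Fin 3 → Fin 3 → Sym2 (Fin 5) :=
  ![![s(0, 0), s(1, 3), s(2, 4)],
    ![s(1, 2), s(0, 1), s(0, 2)],
    ![s(3, 4), s(0, 3), s(0, 4)]]

lemma K33Coord.ncard_sdiff {G : Graph V α} {a b : Fin 3 → V} {ed : Fin 3 × Fin 3 → α}
    (h : K33Coord G a b ed) : (G.E \ {ed (0, 0)}).ncard = 8 := by
  rw [Set.ncard_sdiff_singleton_of_mem (by rw [h.E_eq]; exact ⟨_, rfl⟩), h.E_eq,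
    ← Set.image_univ, Set.ncard_image_of_injective _ h.ed_inj]
  simp [Set.ncard_univ]

lemma K33Coord.mem_verts {G : Graph V α} {a b : Fin 3 → V} {ed : Fin 3 × Fin 3 → α}
    (h : K33Coord G a b ed) {e : α} (he : e ∈ G.E) {v : V} (hv : v ∈ G.inc e) :
    v ∈ Finset.univ.image a ∪ Finset.univ.image b := by
  rw [h.E_eq] at he
  obtain ⟨p, rfl⟩ := he
  rw [h.inc_eq, Sym2.mem_iff] at hv
  rcases hv with rfl | rfl <;> simp

lemma K33Coord.card_verts_le (a b : Fin 3 → V) :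
    (Finset.univ.image a ∪ Finset.univ.image b).card ≤ 6 := by
  refine (Finset.card_union_le _ _).trans ?_
  have h1 := Finset.card_image_le (s := Finset.univ) (f := a)
  have h2 := Finset.card_image_le (s := Finset.univ) (f := b)
  simp only [Finset.card_univ, Fintype.card_fin] at h1 h2
  omega

lemma ind_zero {ed : Fin 3 × Fin 3 → α} {C : Finset α} {X : Set α}
    (h : (C : Set α) ⊆ X \ {ed (0, 0)}) : ind ed C 0 0 = 0 :=
  if_neg fun h1 => (h h1).2 rfl

lemma K33Coord.finGraphic_delete_dual {G : Graph V α} {a b : Fin 3 → V}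
    {ed : Fin 3 × Fin 3 → α} (h : K33Coord G a b ed) {M : Matroid α} (hM : EvenRep G M) :
    FinGraphic (M ＼ {ed (0, 0)})✶ := by
  refine ⟨_, tableGraph ed deleteDual, (hM.delete {ed (0, 0)}).dual (by
      simp [tableGraph, Graph.delete, h.E_eq]) (S := Finset.univ.image a ∪ Finset.univ.image b)
      (T := Finset.univ) ⟨a 0, by simp⟩ ⟨⟨0⟩, by simp⟩ (fun e he v hv => h.mem_verts he.1 hv)
      (by simp) ?_ ?_⟩
  · have h1 := K33Coord.card_verts_le a b
    have h2 : (G.delete {ed (0, 0)}).E.ncard = 8 := h.ncard_sdiff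
    rw [h2]
    simp
    omega
  · intro C D hC hD hC0 hD0
    have hCE : (C : Set α) ⊆ Set.range ed := h.E_eq ▸ hC.trans sdiff_subset
    have hDE : (D : Set α) ⊆ Set.range ed := h.E_eq ▸ hD.trans sdiff_subset
    apply inter_ne_singleton_of_sum h.ed_inj hCE
    have x00 := ind_zero hC
    have ra := fun i => (h.bd_a hCE i).symm.trans (congrFun hC0 (a i))
    have rb := fun j => (h.bd_b hCE j).symm.trans (congrFun hC0 (b j))
    have rd := fun k => (bd_tableGraph h.ed_inj deleteDual hDE k).symm.trans (congrFun hD0 ⟨k⟩)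
    have ra0 := ra 0
    have ra1 := ra 1
    have ra2 := ra 2
    have rb0 := rb 0
    have rb1 := rb 1
    have rb2 := rb 2
    have rd0 := rd 0
    have rd1 := rd 1
    have rd2 := rd 2
    have rd3 := rd 3
    simp [Fin.sum_univ_three, deleteDual, mult_mk] at ra0 ra1 ra2 rb0 rb1 rb2 rd0 rd1 rd2 rd3 ⊢
    grind

lemma K33Coord.finGraphic_contract_dual {G : Graph V α} {a b : Fin 3 → V}
    {ed : Fin 3 × Fin 3 → α} (h : K33Coord G a b ed) {M : Matroid α} (hM : EvenRep G M) :
    FinGraphic (M ／ {ed (0, 0)})✶ := by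
  have he : ed (0, 0) ∈ G.E := by rw [h.E_eq]; exact ⟨_, rfl⟩
  have hne := h.a_ne_b 0 0
  refine ⟨_, tableGraph ed contractDual, (hM.contractElem he hne (h.inc_eq _)).dual (by
      simp [tableGraph, contractEdge, h.E_eq])
      (S := (Finset.univ.image a ∪ Finset.univ.image b).erase (b 0))
      (T := Finset.univ) ⟨a 0, by simp [hne]⟩ ⟨⟨0⟩, by simp⟩ ?_ (by simp) ?_ ?_⟩
  · intro e he v hv
    obtain ⟨w, hw, rfl⟩ := Sym2.mem_map.1 hv
    have hw' := h.mem_verts he.1 hw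
    by_cases hwb : w = b 0
    · simp [hwb, hne]
    · rw [if_neg hwb]
      exact Finset.mem_erase.2 ⟨hwb, hw'⟩
  · have h1 := K33Coord.card_verts_le a b
    have h2 : (contractEdge G (ed (0, 0)) (a 0) (b 0)).E.ncard = 8 := h.ncard_sdiff
    rw [h2, Finset.card_erase_of_mem (by simp)]
    simp
    omega
  · intro C D hC hD hC0 hD0
    have hCE : (C : Set α) ⊆ Set.range ed := h.E_eq ▸ hC.trans sdiff_subset
    have hDE : (D : Set α) ⊆ Set.range ed := h.E_eq ▸ hD.trans sdiff_subset
    apply inter_ne_singleton_of_sum h.ed_inj hCE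
    have x00 := ind_zero hC
    have hbd : ∀ x, x ≠ a 0 → x ≠ b 0 → bd G C x = 0 := by
      intro x hxa hxb
      have := congrFun hC0 x
      rwa [bd_contractEdge _ _ hne, if_neg hxb, if_neg hxa] at this
    have ra := fun i (hi : i ≠ 0) => (h.bd_a hCE i).symm.trans
      (hbd (a i) (h.a_inj.ne hi) (h.a_ne_b _ _))
    have rb := fun j (hj : j ≠ 0) => (h.bd_b hCE j).symm.trans
      (hbd (b j) (h.a_ne_b _ _).symm (h.b_inj.ne hj))
    have rd := fun k => (bd_tableGraph h.ed_inj contractDual hDE k).symm.trans (congrFun hD0 ⟨k⟩)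
    have ra1 := ra 1 (by decide)
    have ra2 := ra 2 (by decide)
    have rb1 := rb 1 (by decide)
    have rb2 := rb 2 (by decide)
    have rd0 := rd 0
    have rd1 := rd 1
    have rd2 := rd 2
    have rd3 := rd 3
    have rd4 := rd 4
    simp [Fin.sum_univ_three, contractDual, mult_mk] at ra1 ra2 rb1 rb2 rd0 rd1 rd2 rd3 rd4 ⊢
    grind

end K33

/-! ### The dual of `M(K₃,₃)` is not a bicircular lift matroid -/

section NonMembership

open scoped Classical

variable {V V' α : Type u}

lemma K33Coord.ncard_E {G : Graph V α} {a b : Fin 3 → V} {ed : Fin 3 × Fin 3 → α}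
    (h : K33Coord G a b ed) : G.E.ncard = 9 := by
  rw [h.E_eq, ← Set.image_univ, Set.ncard_image_of_injective _ h.ed_inj]
  simp [Set.ncard_univ]

lemma K33Coord.finite_E {G : Graph V α} {a b : Fin 3 → V} {ed : Fin 3 × Fin 3 → α}
    (h : K33Coord G a b ed) : G.E.Finite := by
  rw [h.E_eq]; exact Set.finite_range _

lemma K33Coord.bd_square {G : Graph V α} {a b : Fin 3 → V} {ed : Fin 3 × Fin 3 → α}
    (h : K33Coord G a b ed) {i i' j j' : Fin 3} (hi : i' ≠ i) (hj : j' ≠ j) :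
    bd G (({(i, j), (i, j'), (i', j), (i', j')} : Finset (Fin 3 × Fin 3)).image ed) = 0 := by
  funext x
  rw [bd, Finset.sum_image (fun _ _ _ _ h1 => h.ed_inj h1), Finset.sum_insert,
    Finset.sum_insert, Finset.sum_insert, Finset.sum_singleton]
  · simp only [h.inc_eq, mult_mk, Nat.cast_add, Pi.zero_apply]
    generalize ((if x = a i then 1 else 0 : ℕ) : ZMod 2) = p
    generalize ((if x = a i' then 1 else 0 : ℕ) : ZMod 2) = q
    generalize ((if x = b j then 1 else 0 : ℕ) : ZMod 2) = r
    generalize ((if x = b j' then 1 else 0 : ℕ) : ZMod 2) = s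
    revert p q r s
    decide
  all_goals simp [hi.symm, hj.symm]

lemma exists_square_avoiding : ∀ p q : Fin 3 × Fin 3, p ≠ q → ∃ i' j', i' ≠ p.1 ∧ j' ≠ p.2 ∧
    q ∉ ({(p.1, p.2), (p.1, j'), (i', p.2), (i', j')} : Finset (Fin 3 × Fin 3)) := by
  decide

lemma K33Coord.notMem_circuit {G : Graph V α} {a b : Fin 3 → V} {ed : Fin 3 × Fin 3 → α}
    (h : K33Coord G a b ed) {N : Matroid α} (hM : EvenRep G N✶) {p q : Fin 3 × Fin 3}
    (hpq : p ≠ q) {K : Set α} (hK : N.IsCircuit K) (hKs : K ⊆ {ed p, ed q}) : ed p ∉ K := by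
  intro hp
  obtain ⟨i', j', hi, hj, hq⟩ := exists_square_avoiding p q hpq
  set T : Finset (Fin 3 × Fin 3) := {(p.1, p.2), (p.1, j'), (i', p.2), (i', j')} with hT
  have hpT : p ∈ T := by simp [hT]
  have hQE : ((T.image ed : Finset α) : Set α) ⊆ G.E := by
    rw [h.E_eq, Finset.coe_image]; exact Set.image_subset_range _ _
  have hQdep : N✶.Dep (T.image ed : Finset α) := by
    rw [← not_indep_iff (by rw [hM.1]; exact hQE), hM.2.2 _ hQE]
    intro hf
    have := hf _ subset_rfl (h.bd_square hi hj)
    have h1 : ed p ∈ T.image ed := Finset.mem_image_of_mem _ hpT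
    simp [this] at h1
  obtain ⟨C, hCQ, hC⟩ := hQdep.exists_isCircuit_subset
  lift C to Finset α using (T.image ed).finite_toSet.subset hCQ
  have h4 := h.four_le_card (hCQ.trans hQE) (hM.isCircuit_bd hC)
    (by exact_mod_cast hC.nonempty)
  have hTc : (T.image ed).card ≤ 4 := Finset.card_image_le.trans Finset.card_le_four
  have hCeq : C = T.image ed :=
    Finset.eq_of_subset_of_card_le (by exact_mod_cast hCQ) (hTc.trans h4)
  have hco : N✶.IsCocircuit K := by
    rw [isCocircuit_def, dual_dual]; exact hK
  refine hC.inter_isCocircuit_ne_singleton hco (e := ed p) ?_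
  ext x
  simp only [Set.mem_inter_iff, Finset.mem_coe, Set.mem_singleton_iff]
  constructor
  · rintro ⟨hx, hxK⟩
    rcases hKs hxK with h1 | h1
    · exact h1
    · exfalso
      rw [hCeq, h1, Finset.mem_image] at hx
      obtain ⟨r, hr, hrq⟩ := hx
      exact hq (h.ed_inj hrq ▸ hr)
  · rintro rfl
    exact ⟨by rw [hCeq]; exact Finset.mem_image_of_mem _ hpT, hp⟩

/-- `M(K₃,₃)` has no cocircuit of size at most two: each edge lies on a 4-cycle avoiding any given
other edge, and a circuit and a cocircuit never meet in one element. -/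
lemma K33Coord.indep_pair {G : Graph V α} {a b : Fin 3 → V} {ed : Fin 3 × Fin 3 → α}
    (h : K33Coord G a b ed) {N : Matroid α} (hM : EvenRep G N✶) {f g : α} (hf : f ∈ G.E)
    (hg : g ∈ G.E) (hfg : f ≠ g) : N.Indep {f, g} := by
  have hNE : N.E = G.E := hM.1
  rw [h.E_eq] at hf hg
  obtain ⟨p, rfl⟩ := hf
  obtain ⟨q, rfl⟩ := hg
  have hpq : p ≠ q := fun h1 => hfg (by rw [h1])
  rw [indep_iff_forall_subset_not_isCircuit (by
    rw [hNE, h.E_eq]; rintro x (rfl | rfl) <;> exact ⟨_, rfl⟩)]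
  intro K hKs hK
  have h1 := h.notMem_circuit hM hpq hK hKs
  have h2 := h.notMem_circuit hM hpq.symm hK (by rwa [Set.pair_comm])
  obtain ⟨x, hx⟩ := hK.nonempty
  rcases hKs hx with rfl | rfl
  · exact h1 hx
  · exact h2 hx

/-- In a bicircular lift matroid the dependent sets are those containing two cycles. -/
lemma IsLiftRep.dep_iff {H : Graph V' α} {N : Matroid α} (h : IsLiftRep H N)
    (hfin : H.E.Finite) {X : Set α} : N.Dep X ↔ X ⊆ H.E ∧ H.HasTwoCycles X := by
  constructor
  · intro hX
    refine ⟨h.1 ▸ hX.subset_ground, ?_⟩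
    obtain ⟨C, hCX, hC⟩ := hX.exists_isCircuit_subset
    obtain ⟨C₁, C₂, h1, h2, hne, hs1, hs2⟩ := ((h.2 C).1 hC).1.2
    exact ⟨C₁, C₂, h1, h2, hne, hs1.trans hCX, hs2.trans hCX⟩
  · intro hX
    obtain ⟨C, hCX, hC⟩ := (hfin.finite_subsets.subset
      (t := {Y | Y ⊆ H.E ∧ H.HasTwoCycles Y}) (fun Y hY => hY.1)).exists_le_minimal hX
    exact ((h.2 C).2 hC).1.superset hCX (by rw [h.1]; exact hX.1)

/-- A forest plus one edge contains at most one cycle: two cycles would share the new edge, and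
their symmetric difference would be a nonempty even set in the forest. -/
lemma IsLiftRep.indep_insert {H : Graph V' α} {N : Matroid α} (h : IsLiftRep H N)
    (hfin : H.E.Finite) {A : Set α} (hA : A ⊆ H.E) (hfree : EvenFree H A) {g : α}
    (hg : g ∈ H.E) : N.Indep (insert g A) := by
  have hsub : insert g A ⊆ H.E := insert_subset hg hA
  rw [← not_dep_iff (by rw [h.1]; exact hsub), h.dep_iff hfin]
  rintro ⟨-, C₁, C₂, h1, h2, hne, hs1, hs2⟩
  lift C₁ to Finset α using h1.2.1
  lift C₂ to Finset α using h2.2.1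
  have hmem : ∀ C : Finset α, H.IsCycle C → (C : Set α) ⊆ insert g A → g ∈ C := by
    intro C hC hs
    by_contra hgC
    have := hfree C (fun y hy => (hs hy).resolve_left (fun h3 => hgC (h3 ▸ hy)))
      (IsCycle.bd_eq_zero hC)
    simpa [this] using hC.2.2.1
  have hg1 := hmem C₁ h1 hs1
  have hg2 := hmem C₂ h2 hs2
  have := hfree (symmDiff C₁ C₂) (by
    intro y hy
    rcases Finset.mem_symmDiff.1 (Finset.mem_coe.1 hy) with ⟨h3, h4⟩ | ⟨h3, h4⟩
    · exact (hs1 h3).resolve_left (fun h5 => h4 (h5 ▸ hg2))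
    · exact (hs2 h3).resolve_left (fun h5 => h4 (h5 ▸ hg1))) (by
    rw [bd_symmDiff, IsCycle.bd_eq_zero h1, IsCycle.bd_eq_zero h2, add_zero])
  exact hne (by rw [symmDiff_eq_bot.1 this])

lemma IsLiftRep.isBase_exchange {H : Graph V' α} {N : Matroid α} (h : IsLiftRep H N)
    (hfin : H.E.Finite) {B : Set α} (hB : N.IsBase B) {f : α} (hf : f ∈ B)
    (hfree : EvenFree H (B \ {f})) {g : α} (hg : g ∈ H.E) (hgB : g ∉ B \ {f}) :
    N.IsBase (insert g (B \ {f})) := by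
  have hBE : B ⊆ H.E := h.1 ▸ hB.subset_ground
  obtain ⟨B', hB', hsub⟩ := (h.indep_insert hfin (sdiff_subset.trans hBE) hfree
    hg).exists_isBase_superset
  have hB'f : B'.Finite := hfin.subset (h.1 ▸ hB'.subset_ground)
  have hBf : B.Finite := hfin.subset hBE
  have hc : (insert g (B \ {f})).ncard = B.ncard := by
    rw [ncard_insert_of_notMem hgB (hBf.subset sdiff_subset), ncard_sdiff_singleton_add_one hf hBf]
  rw [Set.eq_of_subset_of_ncard_le hsub (by
    rw [hc, hB.ncard_eq_ncard_of_isBase hB']) hB'f]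
  exact hB'

/-- If deleting `f` from a base `B` of a bicircular lift matroid leaves a forest, then the
complement of that forest is a cocircuit, because the forest can be completed to a base by any
further edge. -/
lemma IsLiftRep.isCircuit_dual {H : Graph V' α} {N : Matroid α} (h : IsLiftRep H N)
    (hfin : H.E.Finite) {B : Set α} (hB : N.IsBase B) {f : α} (hf : f ∈ B)
    (hfree : EvenFree H (B \ {f})) : N✶.IsCircuit (N.E \ (B \ {f})) := by
  rw [isCircuit_iff_dep_forall_sdiff_singleton_indep]
  constructor
  · rw [← not_indep_iff (by simp)]
    intro hi
    have := hB.compl_isBase_dual.eq_of_subset_indep hi (sdiff_subset_sdiff_right sdiff_subset)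
    have h1 : f ∈ N.E \ (B \ {f}) := ⟨hB.subset_ground hf, fun h2 => h2.2 rfl⟩
    rw [← this] at h1
    exact h1.2 hf
  · intro e he
    have := (h.isBase_exchange hfin hB hf hfree (h.1 ▸ he.1) he.2).compl_isBase_dual.indep
    convert this using 1
    ext x
    simp only [mem_sdiff, mem_singleton_iff, mem_insert_iff]
    tauto

lemma K33Coord.not_isLiftRep {G : Graph V α} {a b : Fin 3 → V} {ed : Fin 3 × Fin 3 → α}
    (h : K33Coord G a b ed) {N : Matroid α} (hM : EvenRep G N✶) (H : Graph V' α) :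
    ¬ IsLiftRep H N := by
  intro hL
  have hNE : N.E = G.E := hM.1
  have hHE : H.E = G.E := hL.1.symm.trans hNE
  have hfin : H.E.Finite := hHE ▸ h.finite_E
  have hEf : N.E.Finite := hL.1 ▸ hfin
  -- `N` has no coloop, so no base is the whole ground set
  have hout : ∀ B, N.IsBase B → ∃ g ∈ N.E, g ∉ B := by
    intro B hB
    by_contra! hall
    have heE : ed (0, 0) ∈ G.E := by rw [h.E_eq]; exact ⟨_, rfl⟩
    have hi : N✶.Indep {ed (0, 0)} := by
      rw [hM.2.2 _ (by simpa using heE)]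
      intro D hD h0
      by_contra hne
      have h4 := h.four_le_card (hD.trans (by simpa using heE)) h0
        (Finset.nonempty_iff_ne_empty.2 hne)
      have h1 : D.card ≤ 1 := Finset.card_le_card (t := {ed (0, 0)}) (by exact_mod_cast hD)
      omega
    obtain ⟨B', hB', hdis⟩ := (dual_indep_iff_exists (by simpa [hNE] using heE)).1 hi
    have := hB'.eq_of_subset_isBase hB (fun x hx => hall x (hB'.subset_ground hx))
    rw [this] at hdis
    exact hdis.le_bot ⟨rfl, hall _ (hNE ▸ heE)⟩
  -- Two distinct edges of the cycle in `B` would give cocircuits whose symmetric difference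
  -- is that pair, an even set of `K₃,₃` that is too small; so the cycle in `B` is a loop.
  have hloop : ∀ B, N.IsBase B → ∃ f ∈ B, H.IsCycle {f} ∧ EvenFree H (B \ {f}) := by
    intro B hB
    have hBE : B ⊆ H.E := hL.1 ▸ hB.subset_ground
    have hnf : ¬ EvenFree H B := by
      intro hf
      obtain ⟨g, hgE, hgB⟩ := hout B hB
      have := hB.eq_of_subset_indep (hL.indep_insert hfin hBE hf (hL.1 ▸ hgE))
        (subset_insert g B)
      exact hgB (this ▸ mem_insert g B)
    rw [evenFree_iff_no_isCycle hBE] at hnf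
    push Not at hnf
    obtain ⟨C, hCB, hC⟩ := hnf
    have hfree : ∀ f ∈ C, EvenFree H (B \ {f}) := by
      intro f hf
      rw [evenFree_iff_no_isCycle (sdiff_subset.trans hBE)]
      intro C' hC' hcyc
      refine ((hL.dep_iff hfin).2 ⟨hBE, C, C', hC, hcyc, ?_, hCB,
        hC'.trans sdiff_subset⟩).not_indep hB.indep
      rintro rfl
      exact (hC' hf).2 rfl
    obtain ⟨f, hf⟩ := hC.2.2.1
    have hsing : C = {f} := by
      refine Set.eq_singleton_iff_unique_mem.2 ⟨hf, fun f' hf' => ?_⟩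
      by_contra hne
      have k1 := hL.isCircuit_dual hfin hB (hCB hf) (hfree f hf)
      have k2 := hL.isCircuit_dual hfin hB (hCB hf') (hfree f' hf')
      have hsd : symmDiff (N.E \ (B \ {f})) (N.E \ (B \ {f'})) = {f, f'} := by
        have e1 := hB.subset_ground (hCB hf)
        have e2 := hB.subset_ground (hCB hf')
        have e3 := hCB hf
        have e4 := hCB hf'
        ext x
        simp only [Set.mem_symmDiff, mem_sdiff, mem_singleton_iff, mem_insert_iff]
        grind
      generalize N.E \ (B \ {f}) = K₁ at k1 hsd
      generalize N.E \ (B \ {f'}) = K₂ at k2 hsd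
      lift K₁ to Finset α using hEf.subset k1.subset_ground
      lift K₂ to Finset α using hEf.subset k2.subset_ground
      have hsd' : symmDiff K₁ K₂ = {f, f'} := by
        apply Finset.coe_injective
        rw [Finset.coe_symmDiff, hsd]; simp
      have h0 : bd G {f, f'} = 0 := by
        rw [← hsd', bd_symmDiff, hM.isCircuit_bd k1, hM.isCircuit_bd k2, add_zero]
      have h4 := h.four_le_card (C := {f, f'}) (by
        rw [← hHE]
        intro x hx
        simp only [Finset.coe_insert, Finset.coe_singleton] at hx
        rcases hx with rfl | rfl
        · exact hBE (hCB hf)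
        · exact hBE (hCB hf')) h0 ⟨f, by simp⟩
      have h2 : ({f, f'} : Finset α).card ≤ 2 := Finset.card_le_two
      omega
    exact ⟨f, hCB hf, hsing ▸ hC, hfree f hf⟩
  -- Exchanging the loop `f` for an edge `g` outside `B` shows that `g` is a loop too, and two
  -- loops of `H` are dependent in the lift matroid.
  obtain ⟨B, hB⟩ := N.exists_isBase
  obtain ⟨f, hfB, hfc, hfree⟩ := hloop B hB
  obtain ⟨g, hgE, hgB⟩ := hout B hB
  obtain ⟨g', hg', hgc, -⟩ := hloop _ (hL.isBase_exchange hfin hB hfB hfree (hL.1 ▸ hgE)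
    (fun h1 => hgB h1.1))
  rcases hg' with rfl | hg'
  · have hne : f ≠ g' := fun h1 => hgB (h1 ▸ hfB)
    refine ((hL.dep_iff hfin).2 ⟨?_, {f}, {g'}, hfc, hgc, by simpa using hne, by simp,
      by simp⟩).not_indep (h.indep_pair hM (hNE ▸ hB.subset_ground hfB) (hNE ▸ hgE) hne)
    rintro x (rfl | rfl)
    · exact hfc.1 rfl
    · exact hgc.1 rfl
  · exact (evenFree_iff_no_isCycle (sdiff_subset.trans (hL.1 ▸ hB.subset_ground))).1 hfree _
      (by simpa using hg') hgc

/-! ### The dual of `M(K₃,₃)` is not graphic, but its proper minors are -/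

/-- If the dual of `M(K₃,₃)` were the cycle matroid of `H`, every nonempty star of `H` would contain
an even set of `K₃,₃` and so have at least four edges. Nine edges then give at most four vertices
in `H`, whereas a base of `N` is a forest of `H` with at least four edges. -/
lemma K33Coord.not_evenRep {G : Graph V α} {a b : Fin 3 → V} {ed : Fin 3 × Fin 3 → α}
    (h : K33Coord G a b ed) {N : Matroid α} (hM : EvenRep G N✶) (H : Graph V' α) :
    ¬ EvenRep H N := by
  intro hH
  have hNE : N.E = G.E := hM.1
  have hHE : H.E = G.E := hH.1.symm.trans hNE
  set F : Finset α := hH.2.1.toFinset with hF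
  have hFmem : ∀ e, e ∈ F ↔ e ∈ H.E := fun e => by simp [hF]
  have hFcard : F.card = 9 := by
    rw [hF, ← ncard_eq_toFinset_card _ hH.2.1, hHE, h.ncard_E]
  -- The star of a vertex: its incident non-loop edges.
  set star : V' → Finset α := fun v => F.filter (fun e => v ∈ H.inc e ∧ ¬ (H.inc e).IsDiag)
    with hstar
  have hmult : ∀ v, ∀ e ∈ F, (mult (H.inc e) v : ZMod 2) = if e ∈ star v then 1 else 0 := by
    intro v e he
    simp only [hstar, Finset.mem_filter, he, true_and]
    induction H.inc e using Sym2.ind with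
    | _ x y =>
      simp only [mult_mk, Sym2.mem_iff, Sym2.mk_isDiag_iff]
      by_cases h1 : v = x <;> by_cases h2 : v = y <;> by_cases h3 : x = y <;> simp_all
      rfl
  set S : Finset V' := F.biUnion (fun e => (H.inc e).toFinset) with hS
  have hSmem : ∀ e ∈ F, ∀ v ∈ H.inc e, v ∈ S := by
    intro e he v hv
    rw [hS, Finset.mem_biUnion]
    exact ⟨e, he, by simpa using hv⟩
  -- The vertices of `H` that meet a non-loop edge.
  set T : Finset V' := S.filter (fun v => (star v).Nonempty) with hT
  have hfour : ∀ v ∈ T, 4 ≤ (star v).card := by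
    intro v hv
    obtain ⟨x, hx⟩ := (Finset.mem_filter.1 hv).2
    have hsE : ((star v : Finset α) : Set α) ⊆ N.E := by
      intro y hy
      rw [hH.1]
      exact (hFmem y).1 (Finset.mem_filter.1 (Finset.mem_coe.1 hy)).1
    have hdep : ¬ N✶.Indep (star v : Finset α) := by
      refine dual_dep_of_forall_inter_ne (Finset.mem_coe.2 hx) hsE fun C hC hCx => ?_
      lift C to Finset α using hH.2.1.subset (hH.1 ▸ hC.subset_ground)
      have h0 := congrFun (hH.isCircuit_bd hC) v
      have hCF : ∀ e ∈ C, e ∈ F := fun e he => (hFmem e).2 (hH.1 ▸ hC.subset_ground he)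
      have hCx' : C ∩ star v = {x} := by exact_mod_cast hCx
      rw [bd, Finset.sum_congr rfl (fun e he => hmult v e (hCF e he)), Finset.sum_boole,
        Finset.filter_mem_eq_inter, hCx'] at h0
      simp at h0
    obtain ⟨C, hC, h0, hne⟩ := hM.exists_bd_of_dep
      ((not_indep_iff (by simpa using hsE)).1 hdep)
    exact (h.four_le_card (hC.trans (hNE ▸ hsE)) h0 hne).trans
      (Finset.card_le_card (by exact_mod_cast hC))
  have hle : ∑ v ∈ T, (star v).card ≤ 18 := by
    calc ∑ v ∈ T, (star v).card ≤ ∑ v ∈ S, ∑ e ∈ F, mult (H.inc e) v := by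
          refine (Finset.sum_le_sum_of_subset (Finset.filter_subset _ _)).trans
            (Finset.sum_le_sum fun v _ => ?_)
          rw [Finset.card_filter]
          refine Finset.sum_le_sum fun e _ => ?_
          unfold mult
          split_ifs <;> simp_all
      _ = ∑ e ∈ F, 2 := by
          rw [Finset.sum_comm]
          exact Finset.sum_congr rfl fun e he => sum_mult _ _ (hSmem e he)
      _ = 18 := by simp [hFcard]
  have hT4 : T.card ≤ 4 := by
    have := (Finset.card_nsmul_le_sum T _ 4 hfour).trans hle
    simp only [smul_eq_mul] at this
    omega
  obtain ⟨B, hB⟩ := N.exists_isBase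
  have hBE : B ⊆ H.E := hH.1 ▸ hB.subset_ground
  have hBfree := (hH.2.2 B hBE).1 hB.indep
  have hBc := hB.compl_isBase_dual
  have hBcE : N.E \ B ⊆ G.E := hNE ▸ sdiff_subset
  have hBcfree := (hM.2.2 _ hBcE).1 hBc.indep
  have hBf := hH.2.1.subset hBE
  have hBcf := hM.2.1.subset hBcE
  have c2 : (N.E \ B).ncard + 1 ≤ 6 := by
    rw [← hBcf.coe_toFinset] at hBcfree
    rw [ncard_eq_toFinset_card _ hBcf]
    exact (hBcfree.card_lt (S := Finset.univ.image a ∪ Finset.univ.image b) ⟨a 0, by simp⟩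
      (fun e he v hv => h.mem_verts (hBcE (by simpa using he)) hv)).trans
      (K33Coord.card_verts_le a b)
  have c3 := ncard_sdiff_add_ncard_of_subset hB.subset_ground (hNE ▸ h.finite_E)
  rw [hNE, h.ncard_E, ← hNE] at c3
  have hnd : ∀ e ∈ B, ¬ (H.inc e).IsDiag := by
    intro e he hd
    have := hBfree {e} (by simpa using he) (by
      funext v
      have heF := (hFmem e).2 (hBE he)
      rw [bd, Finset.sum_singleton, hmult v e heF, if_neg]
      · rfl
      · exact fun h1 => (Finset.mem_filter.1 h1).2.2 hd)
    simp at this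
  have hBT : ∀ e ∈ B, ∀ v ∈ H.inc e, v ∈ T := by
    intro e he v hv
    have heF := (hFmem e).2 (hBE he)
    exact Finset.mem_filter.2 ⟨hSmem e heF v hv,
      ⟨e, Finset.mem_filter.2 ⟨heF, hv, hnd e he⟩⟩⟩
  obtain ⟨e, he⟩ : B.Nonempty := by
    rw [← ncard_pos hBf]; omega
  have c1 : B.ncard + 1 ≤ T.card := by
    rw [← hBf.coe_toFinset] at hBfree
    rw [ncard_eq_toFinset_card _ hBf]
    exact hBfree.card_lt ⟨_, hBT e he _ (Sym2.out_fst_mem _)⟩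
      (fun e he => hBT e (by simpa using he))
  omega

lemma IsK33.finGraphic_of_isStrictMinor {G : Graph V α} (hK : IsK33 G) {N N' : Matroid α}
    (hM : EvenRep G N✶) (hN' : IsStrictMinor N' N) : FinGraphic N' := by
  obtain ⟨⟨C, D, rfl⟩, hne⟩ := hN'
  have hNE : N.E = G.E := hM.1
  change FinGraphic ((N ／ C) ＼ D)
  change (N ／ C) ＼ D ≠ N at hne
  by_cases hC : ∃ e ∈ C, e ∈ N.E
  · obtain ⟨e, heC, heE⟩ := hC
    obtain ⟨a, b, ed, hc, rfl⟩ := hK.exists_coord_at (hNE ▸ heE)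
    have h1 := hc.finGraphic_delete_dual hM
    rw [dual_delete_dual] at h1
    have h2 : N ／ C = (N ／ {ed (0, 0)}) ／ C := by
      rw [contract_contract, singleton_union, insert_eq_of_mem heC]
    rw [h2]
    exact (h1.contract C).delete D
  · have hC' : N ／ C = N := by
      rw [← contract_inter_ground_eq, (show C ∩ N.E = ∅ from
        eq_empty_iff_forall_notMem.2 fun e he => hC ⟨e, he.1, he.2⟩), contract_empty]
    rw [hC'] at hne ⊢
    by_cases hD : ∃ e ∈ D, e ∈ N.E
    · obtain ⟨e, heD, heE⟩ := hD
      obtain ⟨a, b, ed, hc, rfl⟩ := hK.exists_coord_at (hNE ▸ heE)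
      have h1 := hc.finGraphic_contract_dual hM
      rw [dual_contract_dual] at h1
      have h2 : N ＼ D = (N ＼ {ed (0, 0)}) ＼ D := by
        rw [delete_delete, singleton_union, insert_eq_of_mem heD]
      rw [h2]
      exact h1.delete D
    · exact absurd (by
        rw [← delete_inter_ground_eq, (show D ∩ N.E = ∅ from
          eq_empty_iff_forall_notMem.2 fun e he => hD ⟨e, he.1, he.2⟩), delete_empty]) hne

end NonMembership

theorem statement_3 {α : Type u} (N : Matroid α)
    (h : ∃ (V : Type u) (G : Graph V α), IsK33 G ∧ IsGraphicRep G N✶) :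
    ExcludedMinorBL N ∧ ¬ IsBicircularLift N := by
  obtain ⟨V, G, hK, hG⟩ := h
  obtain ⟨a, b, ed, hc⟩ := hK.exists_coord
  have hM : EvenRep G N✶ := hG.evenRep hc.finite_E
  have hlift : ¬ IsBicircularLift N := fun ⟨_, H, hH⟩ => hc.not_isLiftRep hM H hH
  refine ⟨⟨?_, fun N' hN' => ?_⟩, hlift⟩
  · rintro (⟨_, H, hH⟩ | h1)
    · exact hc.not_evenRep hM H (hH.evenRep (by
        rw [← hH.1, show N.E = G.E from hM.1]; exact hc.finite_E))
    · exact hlift h1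
  · obtain ⟨W, H, hH⟩ := hK.finGraphic_of_isStrictMinor hM hN'
    exact Or.inl ⟨W, H, hH.isGraphicRep⟩

end BLFormal
end

section
/- The Fano matroid F_7 is an excluded minor of \overline{BL}; in particular, there is no graph G with L(G) isomorphic to F_7. -/
/-!
Why the Fano matroid is an excluded minor for graphic-or-bicircular-lift matroids. All matroids
involved are represented over `GF(2)`, where circuits are the minimal nonempty zero-sum sets
(`Rep.circuit_iff`), so they are handled through sums of vectors of `GF(2)³`.

*Not graphic* (`fano_not_graphic`). If `F₇ = M(G)`, every vertex star of `G` meets every cycle, in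
particular every line, in an even number of edges. A point set of the Fano plane meeting all lines
evenly has zero or four points, so all degrees of `G` are divisible by `4`. But `G` has seven edges
and no loops, so the degrees sum to `14`.

*Not bicircular lift* (`fano_not_lift`). If `F₇ = L(G)`, a set is dependent iff it contains two
cycles of `G`. Two elements are independent, so `G` has at most one loop; let `e` be a non-loop.
A line `{e, b, c}` contains two cycles which do not both avoid `e`; as cycles form an antichain, one
of them is `{e, b}` or `{e, c}`, so the line contains an edge parallel to `e`. Doing this for two
lines through `e` gives three parallel edges, a dependent set which is not a line: a contradiction.

*Proper minors are graphic* (`exists_rep_of_strictMinor`, `Rep.isGraphic`). A contraction is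
represented in the quotient of `GF(2)³` by the span of the contracted elements. After embedding this
quotient back into `GF(2)³`, a proper minor misses some nonzero vector, which may be taken to be
`(1,1,1)`. The remaining vectors are zero or edge vectors of `K₄`, and the minor is the cycle
matroid of a graph on the vertices of `K₄` with loops and parallel edges: a vector sum vanishes iff
all degrees are even, and the minimal nonempty edge sets with even degrees are the cycles.
-/

open Set Matroid

universe u

namespace BLFormal

/-! ### Linear algebra over `GF(2)` -/

/-- The ambient space `GF(2)³` of the Fano representation. -/
abbrev F := Fin 3 → ZMod 2

/-- Over `GF(2)`, a family is linearly independent iff no nonempty subfamily sums to zero. -/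
lemma li_iff {α : Type u} (w : α → F) (I : Set α) :
    LinearIndepOn (ZMod 2) w I ↔
      ∀ T : Finset α, ↑T ⊆ I → ∑ x ∈ T, w x = 0 → T = ∅ := by
  classical
  rw [linearIndepOn_iff']
  constructor
  · intro h T hT hs
    by_contra hne
    obtain ⟨x, hx⟩ := Finset.nonempty_iff_ne_empty.2 hne
    exact one_ne_zero (h T (fun _ => 1) hT (by simpa using hs) x hx)
  · intro h T g hT hs i hi
    by_contra hg
    have h2 : ∀ z : ZMod 2, z ≠ 0 → z = 1 := by decide
    have := h (T.filter (g · ≠ 0)) (fun x hx => hT (by simp at hx; exact hx.1)) (by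
      rw [← hs, Finset.sum_filter]
      refine Finset.sum_congr rfl fun x _ => ?_
      by_cases hx : g x = 0
      · simp [hx]
      · simp [h2 _ hx])
    exact Finset.notMem_empty i (this ▸ by simp [hi, hg])

/-- The edge of `K₄` represented by a vector: the coordinate vectors join vertex `0` to the
vertices `1, 2, 3`, and a sum of two of them joins the corresponding two vertices.
The zero vector is a loop at `0`; the value at `(1,1,1)` is junk. -/
def gr (x : F) : Sym2 (Fin 4) :=
  if x = ![1,0,0] then s(0,1) else if x = ![0,1,0] then s(0,2) else if x = ![0,0,1] then s(0,3)
  else if x = ![1,1,0] then s(1,2) else if x = ![1,0,1] then s(1,3) else if x = ![0,1,1] then s(2,3)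
  else s(0,0)

/-- The functional that reads off the parity of the degree at a vertex of `K₄`. -/
def ell (v : Fin 4) : F := ![![1,1,1], ![1,0,0], ![0,1,0], ![0,0,1]] v

lemma gr_parity : ∀ (x : F) (v : Fin 4), x ≠ 1 →
    ((if v ∈ gr x then 1 else 0) + (if gr x = Sym2.diag v then 1 else 0) : ZMod 2) =
      ell v ⬝ᵥ x := by
  decide +kernel

lemma ell_separates : ∀ (x : F), (∀ v, ell v ⬝ᵥ x = 0) → x = 0 := by decide +kernel

set_option synthInstance.maxHeartbeats 200000 in
set_option synthInstance.maxSize 2000 in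
/-- The nonempty sets of edges of `K₄` with zero sum are its triangles and 4-cycles;
in particular each is 2-regular and has diameter at most two. -/
lemma even_K4 : ∀ S : Finset F, 0 ∉ S → 1 ∉ S → S.Nonempty → ∑ x ∈ S, x = 0 →
    (∀ v : Fin 4, (∃ x ∈ S, v ∈ gr x) →
      (S.filter (v ∈ gr ·)).card + (S.filter (gr · = Sym2.diag v)).card = 2) ∧
    ∀ u v, (∃ x ∈ S, u ∈ gr x) → (∃ x ∈ S, v ∈ gr x) →
      u = v ∨ (∃ x ∈ S, gr x = s(u, v)) ∨
        ∃ z, (∃ x ∈ S, gr x = s(u, z)) ∧ (∃ x ∈ S, gr x = s(z, v)) := by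
  decide +kernel

/-- A set of points of the Fano plane meeting every line evenly is empty or the complement of a
line, hence has zero or four points. -/
lemma four_dvd_card : ∀ T : Finset F, 0 ∉ T →
    (∀ p q : F, p ≠ 0 → q ≠ 0 → p ≠ q →
      Even (({p, q, p + q} : Finset F).filter (· ∈ T)).card) → 4 ∣ T.card := by
  decide +kernel

lemma exists_functional : ∀ p : F, p ≠ 0 → ∃ f : F, f ⬝ᵥ p = 1 ∧ f ⬝ᵥ 1 = 1 := by decide +kernel

set_option synthInstance.maxHeartbeats 200000 in
set_option synthInstance.maxSize 2000 in
/-- Through each point of the Fano plane there are two lines which meet only in that point. -/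
lemma exists_two_lines : ∀ p : F, p ≠ 0 → ∃ q r : F, q ≠ 0 ∧ r ≠ 0 ∧ q ≠ p ∧ r ≠ p ∧
    (∀ b c : F, (b = q ∨ b = p + q) → (c = r ∨ c = p + r) → b ≠ c ∧ p + b + c ≠ 0) := by
  decide +kernel

/-- Any nonzero vector is moved to `(1,1,1)` by an injective linear map, namely a transvection. -/
lemma exists_transvection (p : F) (hp : p ≠ 0) :
    ∃ φ : F →ₗ[ZMod 2] F, Function.Injective φ ∧ φ p = 1 := by
  obtain ⟨f, hf, hf1⟩ := exists_functional p hp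
  let φ : F →ₗ[ZMod 2] F :=
    { toFun := fun x => x + (f ⬝ᵥ x) • (p + 1)
      map_add' := fun x y => by rw [dotProduct_add, add_smul]; abel
      map_smul' := fun c x => by simp [dotProduct_smul, mul_smul] }
  have hinv : ∀ x, φ (φ x) = x := by
    intro x
    change (x + (f ⬝ᵥ x) • (p + 1)) + (f ⬝ᵥ (x + (f ⬝ᵥ x) • (p + 1))) • (p + 1) = x
    have : f ⬝ᵥ (p + 1) = 0 := by rw [dotProduct_add, hf, hf1]; rfl
    rw [dotProduct_add, dotProduct_smul, this, smul_zero, add_zero, add_assoc,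
      CharTwo.add_self_eq_zero, add_zero]
  refine ⟨φ, Function.LeftInverse.injective hinv, ?_⟩
  change p + (f ⬝ᵥ p) • (p + 1) = 1
  rw [hf, one_smul, ← add_assoc, CharTwo.add_self_eq_zero, zero_add]

/-! ### Degrees and cycles -/

namespace Graph

variable {V α : Type u} {G : Graph V α}

lemma deg_mono {C D : Set α} (hC : C.Finite) (h : D ⊆ C) (v : V) : G.deg D v ≤ G.deg C v := by
  unfold deg
  refine add_le_add (Set.ncard_le_ncard ?_ ?_) (Set.ncard_le_ncard ?_ ?_)
  · exact fun e he => ⟨h he.1, he.2⟩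
  · exact hC.subset fun e he => he.1
  · exact fun e he => ⟨h he.1, he.2⟩
  · exact hC.subset fun e he => he.1

lemma deg_eq_zero {C : Set α} {v : V} (h : v ∉ G.vertsOf C) : G.deg C v = 0 := by
  have h1 : {e ∈ C | v ∈ G.inc e} = ∅ := by
    ext e; simp only [mem_ofPred_eq, mem_empty_iff_false, iff_false]
    exact fun he => h ⟨e, he⟩
  have h2 : {e ∈ C | G.inc e = Sym2.diag v} = ∅ := by
    ext e; simp only [mem_ofPred_eq, mem_empty_iff_false, iff_false]
    exact fun he => h ⟨e, he.1, he.2 ▸ by simp [Sym2.diag]⟩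
  rw [deg, h1, h2, Set.ncard_empty]

lemma IsCycle.even_deg {C : Set α} (h : G.IsCycle C) (v : V) : Even (G.deg C v) := by
  by_cases hv : v ∈ G.vertsOf C
  · rw [h.2.2.2.1 v hv]; exact even_two
  · rw [deg_eq_zero hv]; exact Even.zero

/-- A cycle has no proper nonempty edge subset with all degrees even: such a subset has degree two
at each of its vertices, hence is closed under adjacency inside the cycle. -/
lemma IsCycle.eq_of_even {C D : Set α} (hC : G.IsCycle C) (hDC : D ⊆ C) (hD : D.Nonempty)
    (hev : ∀ v, Even (G.deg D v)) : D = C := by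
  obtain ⟨-, hfin, -, hdeg, hconn⟩ := hC
  have key : ∀ v ∈ G.vertsOf D, ∀ e ∈ C, v ∈ G.inc e → e ∈ D := by
    intro v hv e he hve
    have hDfin := hfin.subset hDC
    have hvC : v ∈ G.vertsOf C := by obtain ⟨f, hf, hvf⟩ := hv; exact ⟨f, hDC hf, hvf⟩
    have h2 := hdeg v hvC
    have hle := deg_mono (G := G) hfin hDC v
    have hpos : 0 < {e ∈ D | v ∈ G.inc e}.ncard := by
      rw [Set.ncard_pos (hDfin.subset fun e he => he.1)]
      obtain ⟨f, hf, hvf⟩ := hv; exact ⟨f, hf, hvf⟩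
    have hD2 : G.deg D v = 2 := by
      obtain ⟨k, hk⟩ := hev v
      have : 0 < G.deg D v := by unfold deg; omega
      omega
    have hl : {e ∈ D | G.inc e = Sym2.diag v}.ncard ≤ {e ∈ C | G.inc e = Sym2.diag v}.ncard :=
      Set.ncard_le_ncard (fun e he => ⟨hDC he.1, he.2⟩) (hfin.subset fun e he => he.1)
    have heq : {e ∈ D | v ∈ G.inc e} = {e ∈ C | v ∈ G.inc e} := by
      refine Set.eq_of_subset_of_ncard_le (fun e he => ⟨hDC he.1, he.2⟩) ?_
        (hfin.subset fun e he => he.1)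
      unfold deg at h2 hD2; omega
    have : e ∈ {e ∈ D | v ∈ G.inc e} := heq ▸ ⟨he, hve⟩
    exact this.1
  have key2 : ∀ u v, Relation.ReflTransGen (G.AdjOn C) u v → u ∈ G.vertsOf D →
      v ∈ G.vertsOf D := by
    intro u v h hu
    induction h with
    | refl => exact hu
    | tail _ hadj ih =>
      obtain ⟨e, he, hinc⟩ := hadj
      exact ⟨e, key _ ih e he (by simp [hinc]), by simp [hinc]⟩
  refine hDC.antisymm fun e he => ?_
  obtain ⟨d, hd⟩ := hD
  have hu : (G.inc d).out.1 ∈ G.inc d := Sym2.out_fst_mem _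
  have hv : (G.inc e).out.1 ∈ G.inc e := Sym2.out_fst_mem _
  exact key _ (key2 _ _ (hconn _ ⟨d, hDC hd, hu⟩ _ ⟨e, he, hv⟩) ⟨d, hd, hu⟩) e he hv

lemma IsCycle.eq_of_subset {C D : Set α} (hC : G.IsCycle C) (hD : G.IsCycle D) (h : D ⊆ C) :
    D = C :=
  hC.eq_of_even h hD.2.2.1 hD.even_deg

lemma isCycle_of_loop {e : α} (he : e ∈ G.E) (hl : (G.inc e).IsDiag) : G.IsCycle {e} := by
  obtain ⟨x, hx⟩ : ∃ x, G.inc e = s(x, x) := by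
    induction h : G.inc e with
    | _ a b => rw [h] at hl; obtain rfl : a = b := by simpa using hl
               exact ⟨a, rfl⟩
  refine ⟨by simpa using he, Set.finite_singleton _, Set.singleton_nonempty _, ?_, ?_⟩
  · rintro v ⟨f, rfl, hv⟩
    obtain rfl : v = x := by simpa [hx] using hv
    have h1 : {e ∈ ({f} : Set α) | v ∈ G.inc e} = {f} := by ext e; simp; rintro rfl; exact hv
    have h2 : {e ∈ ({f} : Set α) | G.inc e = Sym2.diag v} = {f} := by
      ext e; simp; rintro rfl; exact hx
    rw [deg, h1, h2, Set.ncard_singleton]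
  · rintro u ⟨f, rfl, hu⟩ v ⟨f', rfl, hv⟩
    obtain rfl : u = x := by simpa [hx] using hu
    obtain rfl : v = u := by simpa [hx] using hv
    exact .refl

lemma isCycle_of_parallel {e f : α} (he : e ∈ G.E) (hf : f ∈ G.E) (hne : e ≠ f)
    (hl : ¬ (G.inc e).IsDiag) (hp : G.inc e = G.inc f) : G.IsCycle {e, f} := by
  refine ⟨by rintro x (rfl | rfl) <;> assumption, by simp, by simp, ?_, ?_⟩
  · intro v hv
    have hve : v ∈ G.inc e := by
      obtain ⟨x, (rfl | rfl), hx⟩ := hv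
      · exact hx
      · exact hp ▸ hx
    have h1 : {x ∈ ({e, f} : Set α) | v ∈ G.inc x} = {e, f} := by
      ext x; simp only [mem_ofPred_eq, and_iff_left_iff_imp]
      rintro (rfl | rfl)
      · exact hve
      · exact hp ▸ hve
    have h2 : {x ∈ ({e, f} : Set α) | G.inc x = Sym2.diag v} = ∅ := by
      ext x; simp only [mem_ofPred_eq, mem_empty_iff_false, iff_false, not_and]
      rintro (rfl | rfl) h
      · exact hl (h ▸ Sym2.diag_isDiag v)
      · exact hl (hp ▸ h ▸ Sym2.diag_isDiag v)
    rw [deg, h1, h2, Set.ncard_pair hne, Set.ncard_empty]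
  · have hin : ∀ u ∈ G.vertsOf {e, f}, u ∈ G.inc e := by
      rintro u ⟨x, (rfl | rfl), hx⟩
      · exact hx
      · exact hp ▸ hx
    intro u hu v hv
    by_cases huv : u = v
    · subst huv; exact .refl
    · exact .single ⟨e, by simp, (Sym2.mem_and_mem_iff huv).1 ⟨hin u hu, hin v hv⟩⟩

lemma IsCycle.loop {e : α} (h : G.IsCycle {e}) : (G.inc e).IsDiag := by
  have hu : (G.inc e).out.1 ∈ G.inc e := Sym2.out_fst_mem _
  have h2 := h.2.2.2.1 _ ⟨e, rfl, hu⟩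
  have h1 : {x ∈ ({e} : Set α) | (G.inc e).out.1 ∈ G.inc x}.ncard ≤ 1 := by
    rw [← Set.ncard_singleton e]; exact Set.ncard_le_ncard (fun x hx => hx.1)
  have h3 : 0 < {x ∈ ({e} : Set α) | G.inc x = Sym2.diag (G.inc e).out.1}.ncard := by
    unfold deg at h2; omega
  obtain ⟨x, rfl, hx⟩ := (Set.ncard_pos ((Set.finite_singleton e).subset fun x hx => hx.1)).1 h3
  rw [hx]; exact Sym2.diag_isDiag _

lemma IsCycle.parallel {e f : α} (h : G.IsCycle {e, f}) (hne : e ≠ f) :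
    G.inc f = G.inc e := by
  have hl : ∀ x ∈ ({e, f} : Set α), ¬ (G.inc x).IsDiag := by
    intro x hx hd
    have := h.eq_of_subset (isCycle_of_loop (h.1 hx) hd) (by simpa using hx)
    have h2 := congrArg Set.ncard this
    rw [Set.ncard_pair hne, Set.ncard_singleton] at h2
    omega
  have hmem : ∀ u ∈ G.inc e, u ∈ G.inc f := by
    intro u hu
    have h2 := h.2.2.2.1 u ⟨e, by simp, hu⟩
    have h3 : {x ∈ ({e, f} : Set α) | G.inc x = Sym2.diag u} = ∅ := by
      ext x; simp only [mem_ofPred_eq, mem_empty_iff_false, iff_false, not_and]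
      intro hx hd
      exact hl x hx (hd ▸ Sym2.diag_isDiag u)
    rw [deg, h3, Set.ncard_empty, add_zero] at h2
    have h4 : {x ∈ ({e, f} : Set α) | u ∈ G.inc x} = {e, f} :=
      Set.eq_of_subset_of_ncard_le (fun x hx => hx.1) (by rw [h2, Set.ncard_pair hne])
    have : f ∈ {x ∈ ({e, f} : Set α) | u ∈ G.inc x} := by rw [h4]; simp
    exact this.2
  have hle := hl e (by simp)
  induction h' : G.inc e with
  | _ a b =>
    rw [h'] at hmem hle
    exact (Sym2.mem_and_mem_iff (by simpa using hle)).1 ⟨hmem a (by simp), hmem b (by simp)⟩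

end Graph

/-! ### Binary matroids and their circuits -/

/-- `w` represents the matroid `N` over `GF(2)`. -/
def Rep {α : Type u} (N : Matroid α) (w : α → F) : Prop :=
  ∀ I ⊆ N.E, (N.Indep I ↔ LinearIndepOn (ZMod 2) w I)

section Rep

variable {α : Type u} {N : Matroid α} {w : α → F}

lemma Rep.dep_iff (h : Rep N w) {X : Set α} (hX : X ⊆ N.E) :
    N.Dep X ↔ ∃ T : Finset α, ↑T ⊆ X ∧ T.Nonempty ∧ ∑ x ∈ T, w x = 0 := by
  rw [← Matroid.not_indep_iff hX, h X hX, li_iff]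
  push Not
  exact exists_congr fun T => by tauto

/-- The circuits of a binary matroid are the minimal nonempty sets with zero sum. -/
lemma Rep.circuit_iff (h : Rep N w) {C : Set α} :
    Circuit N C ↔ ∃ T : Finset α, C = ↑T ∧ ↑T ⊆ N.E ∧ T.Nonempty ∧ ∑ x ∈ T, w x = 0 ∧
      ∀ T' ⊆ T, T'.Nonempty → ∑ x ∈ T', w x = 0 → T' = T := by
  constructor
  · rintro ⟨hC, hmin⟩
    obtain ⟨T, hTC, hTne, hT⟩ := (h.dep_iff hC.subset_ground).1 hC
    have aux : ∀ T' : Finset α, ↑T' ⊆ C → T'.Nonempty → ∑ x ∈ T', w x = 0 → C ⊆ ↑T' := by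
      intro T' h1 h2 h3
      exact hmin ((h.dep_iff (h1.trans hC.subset_ground)).2 ⟨T', subset_rfl, h2, h3⟩) h1
    obtain rfl : C = ↑T := (aux T hTC hTne hT).antisymm hTC
    refine ⟨T, rfl, hC.subset_ground, hTne, hT, fun T' h1 h2 h3 => h1.antisymm ?_⟩
    exact_mod_cast aux T' (by exact_mod_cast h1) h2 h3
  · rintro ⟨T, rfl, hTE, hne, hs, hmin⟩
    refine ⟨(h.dep_iff hTE).2 ⟨T, subset_rfl, hne, hs⟩, fun Y hY hYT => ?_⟩
    obtain ⟨T', hT', hne', hs'⟩ := (h.dep_iff hY.subset_ground).1 hY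
    rw [← hmin T' (by exact_mod_cast hT'.trans hYT) hne' hs']
    exact hT'

/-! ### Binary matroids avoiding the vector `(1,1,1)` are graphic -/

/-- The graph on the vertices of `K₄` whose edges are read off from a representation via `gr`. -/
def repGraph (N : Matroid α) (w : α → F) : Graph (ULift.{u} (Fin 4)) α :=
  ⟨N.E, fun e => (gr (w e)).map ULift.up⟩

lemma mem_map_up {z : Sym2 (Fin 4)} {v : ULift.{u} (Fin 4)} :
    v ∈ z.map ULift.up ↔ v.down ∈ z := by
  rw [Sym2.mem_map]
  exact ⟨by rintro ⟨a, ha, rfl⟩; exact ha, fun h => ⟨v.down, h, rfl⟩⟩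

lemma map_up_eq {z : Sym2 (Fin 4)} {u v : ULift.{u} (Fin 4)} :
    z.map ULift.up = s(u, v) ↔ z = s(u.down, v.down) := by
  rw [show s(u, v) = Sym2.map ULift.up s(u.down, v.down) from rfl]
  exact (Sym2.map.injective ULift.up_injective).eq_iff

lemma map_up_isDiag {z : Sym2 (Fin 4)} :
    (z.map (ULift.up : Fin 4 → ULift.{u} (Fin 4))).IsDiag ↔ z.IsDiag := by
  induction z with
  | _ a b => simp

lemma repGraph_deg (T : Finset α) (v : ULift.{u} (Fin 4)) :
    (repGraph N w).deg ↑T v = (T.filter (fun e => v.down ∈ gr (w e))).card +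
      (T.filter (fun e => gr (w e) = Sym2.diag v.down)).card := by
  rw [← Set.ncard_coe_finset, ← Set.ncard_coe_finset, Graph.deg]
  congr 2
  · ext e; simp only [repGraph, mem_ofPred_eq, Finset.mem_coe, Finset.mem_filter, mem_map_up]
  · ext e
    rw [Finset.mem_coe, Finset.mem_filter]
    exact and_congr_right fun _ => map_up_eq

lemma repGraph_parity (hw : ∀ e ∈ N.E, w e ≠ 1) (T : Finset α) (hT : ↑T ⊆ N.E)
    (v : ULift.{u} (Fin 4)) :
    ((repGraph N w).deg ↑T v : ZMod 2) = ell v.down ⬝ᵥ ∑ e ∈ T, w e := by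
  rw [repGraph_deg, dotProduct_sum, Nat.cast_add, Finset.card_filter, Finset.card_filter,
    Nat.cast_sum, Nat.cast_sum, ← Finset.sum_add_distrib]
  refine Finset.sum_congr rfl fun e he => ?_
  rw [← gr_parity _ _ (hw e (hT he))]
  simp

lemma repGraph_even_iff (hw : ∀ e ∈ N.E, w e ≠ 1) (T : Finset α) (hT : ↑T ⊆ N.E) :
    (∀ v, Even ((repGraph N w).deg ↑T v)) ↔ ∑ e ∈ T, w e = 0 := by
  simp_rw [← ZMod.natCast_eq_zero_iff_even, repGraph_parity hw T hT]
  exact ⟨fun h => ell_separates _ fun v => h ⟨v⟩, fun h v => by rw [h, dotProduct_zero]⟩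

lemma gr_isDiag : ∀ x : F, x ≠ 1 → (gr x).IsDiag → x = 0 := by decide +kernel

/-- A minimal zero-sum set is a loop, a pair of parallel edges, or maps injectively onto a
zero-sum set of edges of `K₄`, and so is a cycle in each case. -/
lemma repGraph_isCycle (hw : ∀ e ∈ N.E, w e ≠ 1) (T : Finset α) (hT : ↑T ⊆ N.E)
    (hne : T.Nonempty) (hs : ∑ x ∈ T, w x = 0)
    (hmin : ∀ T' ⊆ T, T'.Nonempty → ∑ x ∈ T', w x = 0 → T' = T) :
    (repGraph N w).IsCycle ↑T := by
  classical
  by_cases h0 : ∃ l ∈ T, w l = 0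
  · obtain ⟨l, hl, hl0⟩ := h0
    obtain rfl := hmin {l} (by simpa using hl) (by simp) (by simpa using hl0)
    rw [Finset.coe_singleton]
    refine Graph.isCycle_of_loop (hT hl) (map_up_isDiag.2 ?_)
    rw [hl0]; decide
  push Not at h0
  by_cases hinj : Set.InjOn w (T : Set α)
  swap
  · obtain ⟨x, hx, y, hy, hxy, hne'⟩ : ∃ x ∈ T, ∃ y ∈ T, w x = w y ∧ x ≠ y := by
      simpa [Set.InjOn] using hinj
    obtain rfl := hmin {x, y} (by simp [Finset.insert_subset_iff, hx, hy]) (by simp) (by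
      rw [Finset.sum_pair hne', hxy, CharTwo.add_self_eq_zero])
    rw [Finset.coe_pair]
    refine Graph.isCycle_of_parallel (hT hx) (hT hy) hne' (fun hd => ?_) ?_
    · exact h0 x hx (gr_isDiag _ (hw _ (hT hx)) (map_up_isDiag.1 hd))
    · simp [repGraph, hxy]
  obtain ⟨hdeg, hconn⟩ := even_K4 (T.image w)
    (by simpa using h0)
    (by simpa using fun x hx => hw x (hT hx))
    (hne.image w) (by rw [Finset.sum_image hinj]; exact hs)
  have hverts : ∀ v, v ∈ (repGraph N w).vertsOf ↑T → ∃ x ∈ T.image w, v.down ∈ gr x := by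
    rintro v ⟨e, he, hv⟩
    exact ⟨w e, Finset.mem_image_of_mem w he, mem_map_up.1 hv⟩
  have hadj : ∀ u v : ULift.{u} (Fin 4), (∃ x ∈ T.image w, gr x = s(u.down, v.down)) →
      (repGraph N w).AdjOn ↑T u v := by
    rintro u v ⟨x, hx, hg⟩
    obtain ⟨e, he, rfl⟩ := Finset.mem_image.1 hx
    exact ⟨e, he, map_up_eq.2 hg⟩
  refine ⟨hT, T.finite_toSet, hne, fun v hv => ?_, fun u hu v hv => ?_⟩
  · rw [repGraph_deg, ← hdeg v.down (hverts v hv), Finset.filter_image, Finset.filter_image,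
      Finset.card_image_of_injOn (hinj.mono fun x hx => (Finset.mem_filter.1 hx).1),
      Finset.card_image_of_injOn (hinj.mono fun x hx => (Finset.mem_filter.1 hx).1)]
  · rcases hconn u.down v.down (hverts u hu) (hverts v hv) with h | h | ⟨z, h1, h2⟩
    · rw [ULift.down_injective h]
    · exact .single (hadj _ _ h)
    · exact (Relation.ReflTransGen.single (hadj u ⟨z⟩ h1)).tail (hadj ⟨z⟩ v h2)

lemma Rep.isGraphic (h : Rep N w) (hw : ∀ e ∈ N.E, w e ≠ 1) : IsGraphic N := by
  refine ⟨ULift.{u} (Fin 4), repGraph N w, rfl, fun C => ?_⟩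
  rw [h.circuit_iff]
  constructor
  · rintro ⟨T, rfl, hT, hne, hs, hmin⟩
    exact repGraph_isCycle hw T hT hne hs hmin
  · intro hC
    have hCE : C ⊆ N.E := hC.1
    obtain ⟨T, rfl⟩ := hC.2.1.exists_finset_coe
    refine ⟨T, rfl, hCE, by exact_mod_cast hC.2.2.1,
      (repGraph_even_iff hw T hCE).1 hC.even_deg, fun T' hT' hne hs => ?_⟩
    have hTT : (T' : Set α) ⊆ ↑T := by exact_mod_cast hT'
    exact_mod_cast hC.eq_of_even hTT (by exact_mod_cast hne)
      ((repGraph_even_iff hw T' (hTT.trans hCE)).2 hs)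

/-! ### Proper minors of the Fano matroid -/

/-- Every proper minor of the Fano matroid is represented by vectors other than `(1,1,1)`:
contracting a nonloop leaves room in `GF(2)³` for the quotient space to miss a nonzero vector, a
deleted element is itself a missed vector, and a transvection moves the missed vector. -/
lemma exists_rep_of_strictMinor {M : Matroid α} {v : α → F}
    (hv : ∀ e ∈ M.E, v e ≠ 0) (hinj : Set.InjOn v M.E) (hM : Rep M v)
    (h : IsStrictMinor N M) : ∃ w, Rep N w ∧ ∀ e ∈ N.E, w e ≠ 1 := by
  obtain ⟨⟨C, D, rfl⟩, hne⟩ := h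
  have hdef : del (con M C) D = (M ／ C) ＼ D := rfl
  rw [hdef] at hne ⊢
  obtain ⟨I, hI⟩ := M.exists_isBasis' C
  set K := Submodule.span (ZMod 2) (v '' I) with hK
  obtain ⟨K', hK'⟩ := K.exists_isCompl
  let f : (F ⧸ K) →ₗ[ZMod 2] F := K'.subtype ∘ₗ (K.quotientEquivOfIsCompl K' hK').toLinearMap
  have hf : Function.Injective f :=
    K'.subtype_injective.comp (K.quotientEquivOfIsCompl K' hK').injective
  have hfK : ∀ x, f x ∈ K' := fun x => Subtype.property _
  have hground : ((M ／ C) ＼ D).E = (M.E \ C) \ D := rfl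
  obtain ⟨p, hp0, hp⟩ : ∃ p : F, p ≠ 0 ∧ ∀ e ∈ ((M ／ C) ＼ D).E, f (K.mkQ (v e)) ≠ p := by
    by_cases hIe : I = ∅
    · subst hIe
      have hbot : K = ⊥ := by simp [hK]
      have hmk : Function.Injective K.mkQ := by
        rw [← LinearMap.ker_eq_bot, Submodule.ker_mkQ, hbot]
      -- Every element of `M` is a nonloop, so a set with empty basis misses the ground set.
      have hCE : ∀ e ∈ M.E, e ∉ C := by
        intro e he heC
        have hind : M.Indep {e} := by
          rw [hM _ (by simpa using he)]
          exact LinearIndepOn.singleton (hv e he)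
        have := hI.eq_of_subset_indep hind (by simp) (by simpa using heC)
        exact Set.singleton_ne_empty e this.symm
      obtain ⟨d, hdE, hdD⟩ : ∃ d ∈ M.E, d ∈ D := by
        by_contra hcon
        push Not at hcon
        apply hne
        rw [← Matroid.delete_inter_ground_eq, ← Matroid.contract_inter_ground_eq]
        have h1 : C ∩ M.E = ∅ := by ext x; simp; exact fun h1 h2 => hCE x h2 h1
        rw [h1, Matroid.contract_empty]
        have h2 : D ∩ M.E = ∅ := by ext x; simp; exact fun h1 h2 => hcon x h2 h1
        rw [h2, Matroid.delete_empty]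
      refine ⟨f (K.mkQ (v d)), ?_, fun e he heq => ?_⟩
      · intro h0
        refine hv d hdE (hmk (hf ?_))
        rw [h0, map_zero, map_zero]
      · rw [hground] at he
        have := hinj he.1.1 hdE (hmk (hf heq))
        subst this
        exact he.2 hdD
    · obtain ⟨i, hi⟩ := Set.nonempty_iff_ne_empty.2 hIe
      have hvi := hv i (hI.indep.subset_ground hi)
      have hiK : v i ∈ K := Submodule.subset_span ⟨i, hi, rfl⟩
      refine ⟨v i, hvi, fun e _ heq => hvi ?_⟩
      exact Submodule.disjoint_def.1 hK'.disjoint _ hiK (heq ▸ hfK _)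
  obtain ⟨φ, hφ, hφp⟩ := exists_transvection p hp0
  refine ⟨fun e => φ (f (K.mkQ (v e))), fun J hJ => ?_,
    fun e he h1 => hp e he (hφ (h1.trans hφp.symm))⟩
  rw [hground] at hJ
  have hJC : Disjoint J C := (Set.disjoint_sdiff_left.mono_left (hJ.trans Set.sdiff_subset))
  have hJD : Disjoint J D := Set.disjoint_sdiff_left.mono_left hJ
  have hJE : J ⊆ M.E := hJ.trans (Set.sdiff_subset.trans Set.sdiff_subset)
  have hIJ : Disjoint I J := (hJC.mono_right hI.subset).symm
  rw [Matroid.delete_indep_iff, and_iff_left hJD, hI.contract_indep_iff,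
    and_iff_left hJC.symm, Set.union_comm,
    hM _ (Set.union_subset hI.indep.subset_ground hJE),
    linearIndepOn_union_iff_quotient hIJ,
    and_iff_right ((hM _ hI.indep.subset_ground).1 hI.indep)]
  exact ((φ ∘ₗ f).linearIndepOn_iff_of_injOn (v := K.mkQ ∘ v) (s := J) (hφ.comp hf).injOn).symm

end Rep

/-! ### The Fano matroid is neither graphic nor bicircular lift -/

section Fano

variable {α : Type u} {N : Matroid α} {v : α → F}

lemma three_le_card (hbij : Set.BijOn v N.E {w | w ≠ 0}) {T : Finset α} (hT : ↑T ⊆ N.E)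
    (hne : T.Nonempty) (hs : ∑ x ∈ T, v x = 0) : 3 ≤ T.card := by
  classical
  by_contra hlt
  have hpos := hne.card_pos
  obtain h1 | h2 : T.card = 1 ∨ T.card = 2 := by omega
  · obtain ⟨a, rfl⟩ := Finset.card_eq_one.1 h1
    exact hbij.mapsTo (hT (Finset.mem_coe.2 (Finset.mem_singleton_self a))) (by simpa using hs)
  · obtain ⟨a, b, hab, rfl⟩ := Finset.card_eq_two.1 h2
    rw [Finset.sum_pair hab] at hs
    exact hab (hbij.injOn (hT (by simp)) (hT (by simp)) (CharTwo.add_eq_zero.1 hs))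

lemma pair_not_dep (hbij : Set.BijOn v N.E {w | w ≠ 0}) (hN : Rep N v) {a b : α}
    (ha : a ∈ N.E) (hb : b ∈ N.E) : ¬ N.Dep {a, b} := by
  classical
  rw [hN.dep_iff (by rintro x (rfl | rfl) <;> assumption)]
  rintro ⟨T, hT, hne, hs⟩
  have h3 := three_le_card hbij
    (hT.trans (by rintro x (rfl | rfl) <;> assumption)) hne hs
  have : T ⊆ {a, b} := by intro x hx; simpa using hT hx
  have := Finset.card_le_card this
  have := Finset.card_le_two (a := a) (b := b)
  omega

lemma eq_of_sum_zero (hbij : Set.BijOn v N.E {w | w ≠ 0}) [DecidableEq α] {a b c : α}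
    (ha : a ∈ N.E) (hb : b ∈ N.E) (hc : c ∈ N.E) {T : Finset α}
    (hT : T ⊆ {a, b, c}) (hne : T.Nonempty) (hs : ∑ x ∈ T, v x = 0) : T = {a, b, c} := by
  have hTE : ↑T ⊆ N.E := by
    intro x hx
    have := hT hx
    simp only [Finset.mem_insert, Finset.mem_singleton] at this
    rcases this with rfl | rfl | rfl <;> assumption
  have := three_le_card hbij hTE hne hs
  exact Finset.eq_of_subset_of_card_le hT (Finset.card_le_three.trans this)

lemma circuit_line (hbij : Set.BijOn v N.E {w | w ≠ 0}) (hN : Rep N v) [DecidableEq α] {a b c : α}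
    (ha : a ∈ N.E) (hb : b ∈ N.E) (hc : c ∈ N.E) (hab : a ≠ b) (hs : v c = v a + v b) :
    Circuit N ({a, b, c} : Finset α) := by
  have hca : c ≠ a := by
    rintro rfl
    exact hbij.mapsTo hb (by simpa using hs)
  have hcb : c ≠ b := by
    rintro rfl
    exact hbij.mapsTo ha (by simpa using hs)
  refine hN.circuit_iff.2 ⟨_, rfl, ?_, by simp, ?_, fun T' => eq_of_sum_zero hbij ha hb hc⟩
  · intro x hx
    simp only [Finset.coe_insert, Finset.coe_singleton] at hx
    rcases hx with rfl | rfl | rfl <;> assumption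
  · rw [Finset.sum_insert (by simp [hab, hca.symm]), Finset.sum_pair hcb.symm, hs, ← add_assoc,
      CharTwo.add_self_eq_zero]

/-- Every vertex star of a graph with cycle matroid `F₇` meets each line evenly, so the degrees
are divisible by four; but they sum to `14`. -/
lemma fano_not_graphic (hbij : Set.BijOn v N.E {w | w ≠ 0}) (hN : Rep N v) : ¬ IsGraphic N := by
  classical
  rintro ⟨V, G, hE, hG⟩
  have hfin : N.E.Finite := Set.Finite.of_finite_image
    (Set.toFinite _) hbij.injOn
  have hloop : ∀ e ∈ N.E, ¬ (G.inc e).IsDiag := by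
    intro e he hd
    have hC := (hG _).2 (Graph.isCycle_of_loop (hE ▸ he) hd)
    exact pair_not_dep hbij hN he he (by simpa using hC.prop)
  obtain ⟨Ef, hEf⟩ := hfin.exists_finset_coe
  have hmem : ∀ {e}, e ∈ Ef ↔ e ∈ N.E := by intro e; rw [← hEf, Finset.mem_coe]
  have hinj : Set.InjOn v Ef := by rw [hEf]; exact hbij.injOn
  have hcard : Ef.card = 7 := by
    rw [← Finset.card_image_of_injOn hinj]
    have : Ef.image v = Finset.univ.filter (· ≠ 0) := by
      apply Finset.coe_injective
      rw [Finset.coe_image, hEf, hbij.image_eq]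
      ext x; simp
    rw [this]; decide +kernel
  have hstar : ∀ x : V, 4 ∣ (Ef.filter (fun e => x ∈ G.inc e)).card := by
    intro x
    have hinjS : Set.InjOn v (Ef.filter (fun e => x ∈ G.inc e)) :=
      hinj.mono fun e he => (Finset.mem_filter.1 he).1
    rw [← Finset.card_image_of_injOn hinjS]
    apply four_dvd_card
    · intro h0
      obtain ⟨e, he, h0⟩ := Finset.mem_image.1 h0
      exact hbij.mapsTo (hmem.1 (Finset.mem_filter.1 he).1) h0
    · intro p q hp hq hpq
      obtain ⟨a, ha, rfl⟩ := hbij.surjOn hp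
      obtain ⟨b, hb, rfl⟩ := hbij.surjOn hq
      obtain ⟨c, hc, hs⟩ := hbij.surjOn
        (show v a + v b ∈ {w : F | w ≠ 0} from fun h => hpq (CharTwo.add_eq_zero.1 h))
      have hab : a ≠ b := fun h => hpq (h ▸ rfl)
      have hcyc := (hG _).1 (circuit_line hbij hN ha hb hc hab hs)
      have hev := hcyc.even_deg x
      have hsub : ∀ e ∈ ({a, b, c} : Finset α), e ∈ N.E := fun e he => hE ▸ hcyc.1 he
      have h1 : {e ∈ (({a, b, c} : Finset α) : Set α) | x ∈ G.inc e} =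
          ↑(({a, b, c} : Finset α).filter (fun e => x ∈ G.inc e)) := by
        ext e; simp only [mem_ofPred_eq, Finset.mem_coe, Finset.mem_filter]
      have h2 : {e ∈ (({a, b, c} : Finset α) : Set α) | G.inc e = Sym2.diag x} = ∅ := by
        ext e; simp only [mem_ofPred_eq, mem_empty_iff_false, iff_false, not_and]
        intro he hd
        exact hloop e (hsub e he) (hd ▸ Sym2.diag_isDiag x)
      rw [Graph.deg, h1, h2, Set.ncard_empty, add_zero, Set.ncard_coe_finset] at hev
      have h3 : ({v a, v b, v a + v b} : Finset F).filter
            (· ∈ (Ef.filter (fun e => x ∈ G.inc e)).image v) =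
          (({a, b, c} : Finset α).filter (fun e => x ∈ G.inc e)).image v := by
        have himg : ({v a, v b, v a + v b} : Finset F) = ({a, b, c} : Finset α).image v := by
          simp [hs]
        rw [himg, Finset.filter_image]
        congr 1
        refine Finset.filter_congr fun e he => ?_
        rw [Finset.mem_image]
        constructor
        · rintro ⟨e', he', heq⟩
          rw [Finset.mem_filter] at he'
          rw [← hbij.injOn (hmem.1 he'.1) (hsub e he) heq]
          exact he'.2
        · exact fun hx => ⟨e, Finset.mem_filter.2 ⟨hmem.2 (hsub e he), hx⟩, rfl⟩
      rwa [h3, Finset.card_image_of_injOn (hbij.injOn.mono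
        fun e he => hsub e (Finset.mem_filter.1 he).1)]
  let W : Finset V := Ef.biUnion (fun e => (G.inc e).toFinset)
  have hdc := Finset.sum_card_bipartiteAbove_eq_sum_card_bipartiteBelow
    (s := W) (t := Ef) (fun x e => x ∈ G.inc e)
  have hR : ∀ e ∈ Ef, (W.bipartiteBelow (fun x e => x ∈ G.inc e) e).card = 2 := by
    intro e he
    rw [← Sym2.card_toFinset_of_not_isDiag _ (hloop e (hmem.1 he))]
    congr 1
    ext x
    simp only [Finset.bipartiteBelow, Finset.mem_filter, Sym2.mem_toFinset, W, Finset.mem_biUnion]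
    exact ⟨fun h => h.2, fun h => ⟨⟨e, he, h⟩, h⟩⟩
  rw [Finset.sum_congr rfl hR, Finset.sum_const, hcard] at hdc
  have hL : 4 ∣ ∑ x ∈ W, (Ef.bipartiteAbove (fun x e => x ∈ G.inc e) x).card :=
    Finset.dvd_sum fun x _ => hstar x
  rw [hdc] at hL
  revert hL; decide

/-- In a graph with bicircular lift matroid `F₇`, each line through a non-loop edge contains
another edge parallel to it. -/
lemma exists_parallel (hbij : Set.BijOn v N.E {w | w ≠ 0}) (hN : Rep N v) {V : Type u}
    {G : Graph V α} (hdep : ∀ X ⊆ N.E, N.Dep X ↔ G.HasTwoCycles X) {e b c : α}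
    (he : e ∈ N.E) (hb : b ∈ N.E) (hc : c ∈ N.E) (heb : e ≠ b) (hs : v c = v e + v b)
    (hl : ¬ (G.inc e).IsDiag) : G.inc b = G.inc e ∨ (G.inc c = G.inc e ∧ e ≠ c) := by
  classical
  have hec : e ≠ c := by
    rintro rfl
    exact hbij.mapsTo hb (by simpa using hs)
  have hsub : ({e, b, c} : Set α) ⊆ N.E := by rintro x (rfl | rfl | rfl) <;> assumption
  have hcirc := circuit_line hbij hN he hb hc heb hs
  have htwo := hcirc.prop
  rw [Finset.coe_insert, Finset.coe_pair, hdep _ hsub] at htwo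
  obtain ⟨C₁, C₂, h1, h2, hne, hs1, hs2⟩ := htwo
  -- A cycle through `e` inside the line is neither `{e}` nor the entire line.
  have main : ∀ C C', G.IsCycle C → G.IsCycle C' → C ≠ C' → C ⊆ {e, b, c} → C' ⊆ {e, b, c} →
      e ∈ C → G.inc b = G.inc e ∨ (G.inc c = G.inc e ∧ e ≠ c) := by
    intro C C' hC hC' hne hs hs' heC
    by_cases hbC : b ∈ C <;> by_cases hcC : c ∈ C
    · exfalso
      apply hne
      have hall : C' ⊆ C := hs'.trans (by rintro x (rfl | rfl | rfl) <;> assumption)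
      exact (hC.eq_of_subset hC' hall).symm
    · left
      have : C = {e, b} := by
        ext x; constructor
        · intro hx
          rcases hs hx with rfl | rfl | rfl
          · simp
          · simp
          · exact absurd hx hcC
        · rintro (rfl | rfl) <;> assumption
      exact (this ▸ hC).parallel heb
    · right
      have : C = {e, c} := by
        ext x; constructor
        · intro hx
          rcases hs hx with rfl | rfl | rfl
          · simp
          · exact absurd hx hbC
          · simp
        · rintro (rfl | rfl) <;> assumption
      exact ⟨(this ▸ hC).parallel hec, hec⟩
    · exfalso
      have : C = {e} := by
        ext x; constructor
        · intro hx
          rcases hs hx with rfl | rfl | rfl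
          · simp
          · exact absurd hx hbC
          · exact absurd hx hcC
        · rintro rfl; assumption
      exact hl (this ▸ hC).loop
  by_cases he1 : e ∈ C₁
  · exact main C₁ C₂ h1 h2 hne hs1 hs2 he1
  by_cases he2 : e ∈ C₂
  · exact main C₂ C₁ h2 h1 hne.symm hs2 hs1 he2
  exfalso
  refine pair_not_dep hbij hN hb hc ((hdep _ ?_).2 ⟨C₁, C₂, h1, h2, hne, ?_, ?_⟩)
  · rintro x (rfl | rfl) <;> assumption
  · intro x hx
    rcases hs1 hx with rfl | h
    · exact absurd hx he1
    · exact h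
  · intro x hx
    rcases hs2 hx with rfl | h
    · exact absurd hx he2
    · exact h

/-- If `F₇ = L(G)`, two lines through a non-loop edge yield three parallel edges which are not
collinear, although three parallel edges contain two cycles. -/
lemma fano_not_lift (hbij : Set.BijOn v N.E {w | w ≠ 0}) (hN : Rep N v) :
    ¬ IsBicircularLift N := by
  classical
  rintro ⟨V, G, hE, hG⟩
  have hfin : N.E.Finite := Set.Finite.of_finite_image (Set.toFinite _) hbij.injOn
  have hdep : ∀ X ⊆ N.E, N.Dep X ↔ G.HasTwoCycles X := by
    intro X hX
    constructor
    · intro h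
      obtain ⟨C, hCX, hC⟩ := h.exists_isCircuit_subset
      obtain ⟨C₁, C₂, h1, h2, hne, hs1, hs2⟩ := ((hG C).1 hC).prop.2
      exact ⟨C₁, C₂, h1, h2, hne, hs1.trans hCX, hs2.trans hCX⟩
    · intro h
      have hXfin := hfin.subset hX
      have hfam : {Y | Y ⊆ X ∧ G.HasTwoCycles Y}.Finite :=
        hXfin.finite_subsets.subset fun Y hY => hY.1
      obtain ⟨C, hC, hmin⟩ := hfam.exists_minimal ⟨X, subset_rfl, h⟩
      have hcirc := (hG C).2 ⟨⟨hE ▸ hC.1.trans hX, hC.2⟩,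
        fun Y hY hYC => hmin ⟨hYC.trans hC.1, hY.2⟩ hYC⟩
      exact hcirc.prop.superset hC.1 hX
  obtain ⟨e, he, hl⟩ : ∃ e ∈ N.E, ¬ (G.inc e).IsDiag := by
    by_contra hcon
    push Not at hcon
    obtain ⟨a, ha, hva⟩ := hbij.surjOn (show (![1, 0, 0] : F) ∈ {w : F | w ≠ 0} from by
      simp)
    obtain ⟨b, hb, hvb⟩ := hbij.surjOn (show (![0, 1, 0] : F) ∈ {w : F | w ≠ 0} from by
      simp)
    have hab : a ≠ b := by
      rintro rfl
      exact absurd (hva.symm.trans hvb) (by decide)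
    refine pair_not_dep hbij hN ha hb ((hdep _ ?_).2 ⟨{a}, {b},
      Graph.isCycle_of_loop (hE ▸ ha) (hcon a ha), Graph.isCycle_of_loop (hE ▸ hb) (hcon b hb),
      by simpa using hab, by simp, by simp⟩)
    rintro x (rfl | rfl) <;> assumption
  obtain ⟨q, r, hq, hr, hqp, hrp, hqr⟩ := exists_two_lines (v e) (hbij.mapsTo he)
  have partner : ∀ q : F, q ≠ 0 → q ≠ v e → ∃ b ∈ N.E, (v b = q ∨ v b = v e + q) ∧ e ≠ b ∧
      G.inc b = G.inc e := by
    intro q hq hqp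
    obtain ⟨b, hb, rfl⟩ := hbij.surjOn hq
    obtain ⟨c, hc, hs⟩ := hbij.surjOn
      (show v e + v b ∈ {w : F | w ≠ 0} from fun h => hqp (CharTwo.add_eq_zero.1 h).symm)
    have heb : e ≠ b := fun h => hqp (h ▸ rfl)
    rcases exists_parallel hbij hN hdep he hb hc heb hs hl with h | ⟨h, hec⟩
    · exact ⟨b, hb, Or.inl rfl, heb, h⟩
    · exact ⟨c, hc, Or.inr hs, hec, h⟩
  obtain ⟨b, hb, hvb, heb, hpb⟩ := partner q hq hqp
  obtain ⟨c, hc, hvc, hec, hpc⟩ := partner r hr hrp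
  obtain ⟨hbc, hsum⟩ := hqr _ _ hvb hvc
  have hbc' : b ≠ c := fun h => hbc (h ▸ rfl)
  have hsub : ({e, b, c} : Set α) ⊆ N.E := by rintro x (rfl | rfl | rfl) <;> assumption
  have hd : N.Dep {e, b, c} := by
    refine (hdep _ hsub).2 ⟨{e, b}, {e, c},
      Graph.isCycle_of_parallel (hE ▸ he) (hE ▸ hb) heb hl hpb.symm,
      Graph.isCycle_of_parallel (hE ▸ he) (hE ▸ hc) hec hl hpc.symm, ?_, ?_, ?_⟩
    · intro h
      have : b ∈ ({e, c} : Set α) := h ▸ by simp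
      rcases this with h | h
      · exact heb h.symm
      · exact hbc' h
    · rintro x (rfl | rfl) <;> simp
    · rintro x (rfl | rfl) <;> simp
  obtain ⟨T, hT, hne, hs⟩ := (hN.dep_iff hsub).1 hd
  have := eq_of_sum_zero hbij he hb hc (T := T) (fun x hx => by simpa using hT hx) hne hs
  rw [this, Finset.sum_insert (by simp [heb, hec]), Finset.sum_pair hbc', ← add_assoc] at hs
  exact hsum hs

end Fano

theorem statement_4 {α : Type u} (N : Matroid α) (h : IsFano N) :
    ExcludedMinorBL N ∧ ¬ IsBicircularLift N := by
  obtain ⟨v, hbij, hrep⟩ := h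
  have hN : Rep N v := hrep
  have hlift := fano_not_lift hbij hN
  refine ⟨⟨?_, fun N' hN' => ?_⟩, hlift⟩
  · rintro (h | h)
    · exact fano_not_graphic hbij hN h
    · exact hlift h
  · obtain ⟨w, hw, hw1⟩ :=
      exists_rep_of_strictMinor (fun e he => hbij.mapsTo he) hbij.injOn hN hN'
    exact Or.inl (hw.isGraphic hw1)

end BLFormal
end
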